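/- Let f : ℝ → ℝ be smooth, positive, with f(x) → 0 as |x| → ∞ and with bounded first and second derivatives, and let ε > 0. Let u : [0,T) × ℝ → ℝ be a classical solution of ∂u/∂t = ∂²u/∂x² − 2 f(x) u − u² with constant initial datum u(0,x) = −ε, with u ≤ 0 and u(t,·) bounded for each t ∈ [0,T). Let w solve the linear equation ∂w/∂t = ∂²w/∂x² − 2 f(x) w with nonnegative, nonzero integrable initial datum and the regularity and decay guaranteed by parabolic theory. Then for every t ∈ (0,T): ε · ∫₀ᵗ ‖w(t,·)‖_{L¹(ℝ)} / ‖w(s,·)‖_{L¹(ℝ)} ds ≤ 1. Consequently, if there exists T' > 0 with ε ∫₀^{T'} ‖w(T',·)‖_{L¹}/‖w(s,·)‖_{L¹} ds > 1, then no such classical solution can exist on [0,T) for any T > T'. -/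

import Mathlib

open MeasureTheory Filter
open scoped ENNReal NNReal

section Auxiliary

open Set Topology ProbabilityTheory

/-- `f` is differentiable and its derivative has derivative `c` at `x`. -/
def HasSecondDerivAt (f : ℝ → ℝ) (c x : ℝ) : Prop :=
  ∃ f' : ℝ → ℝ, (∀ y, HasDerivAt f (f' y) y) ∧ HasDerivAt f' c x

namespace HasSecondDerivAt

variable {f g : ℝ → ℝ} {c d x : ℝ}

theorem add (hf : HasSecondDerivAt f c x) (hg : HasSecondDerivAt g d x) :
    HasSecondDerivAt (fun y => f y + g y) (c + d) x := by
  obtain ⟨f', hf', hfc⟩ := hf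
  obtain ⟨g', hg', hgc⟩ := hg
  exact ⟨fun y => f' y + g' y, fun y => (hf' y).add (hg' y), hfc.add hgc⟩

theorem neg (hf : HasSecondDerivAt f c x) : HasSecondDerivAt (fun y => -f y) (-c) x := by
  obtain ⟨f', hf', hfc⟩ := hf
  exact ⟨fun y => -f' y, fun y => (hf' y).neg, hfc.neg⟩

theorem quadratic (k₀ k₁ k₂ x : ℝ) :
    HasSecondDerivAt (fun y => k₀ + k₁ * y + k₂ * y ^ 2) (2 * k₂) x := by
  refine ⟨fun y => k₁ + 2 * k₂ * y, fun y => ?_, ?_⟩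
  · have := (((hasDerivAt_id y).const_mul k₁).const_add k₀).add
      (((hasDerivAt_id y).pow 2).const_mul k₂)
    exact this.congr_deriv (by simp; ring)
  · simpa using ((hasDerivAt_id x).const_mul (2 * k₂)).const_add k₁

theorem comp_affine {σ x₀ : ℝ} (hσ : σ ^ 2 = 1) (hf : HasSecondDerivAt f c (x₀ + σ * x)) :
    HasSecondDerivAt (fun y => f (x₀ + σ * y)) c x := by
  obtain ⟨f', hf', hfc⟩ := hf
  have haff : ∀ y, HasDerivAt (fun y => x₀ + σ * y) σ y := fun y => by
    simpa using ((hasDerivAt_id y).const_mul σ).const_add x₀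
  refine ⟨fun y => f' (x₀ + σ * y) * σ, fun y => (hf' _).comp y (haff y), ?_⟩
  have := (HasDerivAt.comp x hfc (haff x)).mul_const σ
  exact this.congr_deriv (by rw [mul_assoc, ← pow_two, hσ, mul_one])

/-- Second order Taylor expansion. -/
theorem tendsto_taylor (hf : HasSecondDerivAt f c x) {f' : ℝ} (hf' : HasDerivAt f f' x) :
    Tendsto (fun k => (f (x + k) - f x - k * f') / k ^ 2) (𝓝[≠] 0) (𝓝 (c / 2)) := by
  obtain ⟨g, hg, hgc⟩ := hf
  obtain rfl : g x = f' := (hg x).unique hf'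
  have hadd : ∀ k : ℝ, HasDerivAt (fun k => x + k) 1 k := fun k => (hasDerivAt_id k).const_add x
  have hdiff : ∀ k, HasDerivAt (fun k => f (x + k) - f x - k * g x) (g (x + k) - g x) k := by
    intro k
    have h1 : HasDerivAt (fun k => f (x + k)) (g (x + k) * 1) k := (hg (x + k)).comp k (hadd k)
    have h2 := (h1.sub_const (f x)).sub ((hasDerivAt_id k).mul_const (g x))
    exact h2.congr_deriv (by ring)
  refine HasDerivAt.lhopital_zero_nhdsNE (f' := fun k => g (x + k) - g x)
    (g' := fun k => 2 * k) (.of_forall hdiff) (.of_forall fun k => ?_) ?_ ?_ ?_ ?_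
  · simpa using hasDerivAt_pow 2 k
  · filter_upwards [self_mem_nhdsWithin] with k hk
    simpa using hk
  · have := (hdiff 0).continuousAt.tendsto
    simpa using this.mono_left nhdsWithin_le_nhds
  · have : Continuous fun k : ℝ => k ^ 2 := by fun_prop
    simpa using (this.tendsto 0).mono_left nhdsWithin_le_nhds
  · have h := (hasDerivAt_iff_tendsto_slope_zero.1 hgc).div_const 2
    refine h.congr fun k => ?_
    simp only [smul_eq_mul]
    by_cases hk : k = 0
    · simp [hk]
    · field_simp

theorem nonneg_of_isLocalMin (hf : HasSecondDerivAt f c x) (hmin : IsLocalMin f x) : 0 ≤ c := by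
  obtain ⟨g, hg, hgc⟩ := id hf
  have hgx : g x = 0 := hmin.hasDerivAt_eq_zero (hg x)
  have h := hf.tendsto_taylor (hg x)
  have hlim : Tendsto (fun k => x + k) (𝓝[≠] 0) (𝓝 x) := by
    have : Continuous fun k : ℝ => x + k := by fun_prop
    simpa using (this.tendsto 0).mono_left nhdsWithin_le_nhds
  have : 0 ≤ c / 2 := by
    refine ge_of_tendsto h ?_
    filter_upwards [hlim.eventually hmin] with k hk
    rw [hgx]
    have : f x ≤ f (x + k) := hk
    apply div_nonneg _ (sq_nonneg k)
    linarith
  linarith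

end HasSecondDerivAt

/-- Weak minimum principle for lower semicontinuous functions on a rectangle. -/
theorem nonneg_of_parabolic_of_lowerSemicontinuousOn {a b t₀ t₁ : ℝ} {Z : ℝ → ℝ → ℝ}
    (hlsc : LowerSemicontinuousOn (fun p : ℝ × ℝ => Z p.1 p.2) (Icc t₀ t₁ ×ˢ Icc a b))
    (hbot : ∀ x ∈ Icc a b, 0 ≤ Z t₀ x)
    (hleft : ∀ τ ∈ Icc t₀ t₁, 0 ≤ Z τ a) (hright : ∀ τ ∈ Icc t₀ t₁, 0 ≤ Z τ b)
    (hZ : ∀ τ ∈ Ioc t₀ t₁, ∀ x ∈ Ioo a b, ∃ D c, HasDerivAt (fun τ => Z τ x) D τ ∧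
      HasSecondDerivAt (Z τ) c x ∧ c < D)
    {τ x : ℝ} (hτ : τ ∈ Icc t₀ t₁) (hx : x ∈ Icc a b) : 0 ≤ Z τ x := by
  obtain ⟨⟨s, y⟩, ⟨hs, hy⟩, hmin⟩ := hlsc.exists_isMinOn
    (⟨(τ, x), hτ, hx⟩ : (Icc t₀ t₁ ×ˢ Icc a b).Nonempty) (isCompact_Icc.prod isCompact_Icc)
  have hmin' : ∀ s' ∈ Icc t₀ t₁, ∀ y' ∈ Icc a b, Z s y ≤ Z s' y' :=
    fun s' hs' y' hy' => hmin (show (s', y') ∈ Icc t₀ t₁ ×ˢ Icc a b from ⟨hs', hy'⟩)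
  refine le_trans ?_ (hmin' τ hτ x hx)
  simp only at hs hy
  rcases hs.1.eq_or_lt with rfl | hs0
  · exact hbot y hy
  rcases hy.1.eq_or_lt with rfl | hya
  · exact hleft s hs
  rcases hy.2.eq_or_lt with rfl | hyb
  · exact hright s hs
  exfalso
  obtain ⟨D, c, hD, hc, hcD⟩ := hZ s ⟨hs0, hs.2⟩ y ⟨hya, hyb⟩
  have hc0 : 0 ≤ c := hc.nonneg_of_isLocalMin <| by
    filter_upwards [Icc_mem_nhds hya hyb] with y' hy'
    exact hmin' s hs y' hy'
  have hD0 : D ≤ 0 := by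
    have hslope := (hasDerivAt_iff_tendsto_slope.1 hD).mono_left
      (nhdsWithin_mono s fun r (hr : r < s) => ne_of_lt hr : 𝓝[<] s ≤ 𝓝[≠] s)
    refine le_of_tendsto hslope ?_
    filter_upwards [Ioo_mem_nhdsLT hs0] with r hr
    rw [slope_def_field]
    exact div_nonpos_of_nonneg_of_nonpos
      (sub_nonneg.2 (hmin' r ⟨hr.1.le, hr.2.le.trans hs.2⟩ y hy)) (sub_nonpos.2 hr.2.le)
  linarith

/-- The Gauss-Weierstrass kernel of `∂ₜ - ∂ₓ²`. -/
noncomputable def heatKernel (τ x : ℝ) : ℝ :=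
  (√(4 * Real.pi * τ))⁻¹ * Real.exp (-(x ^ 2 / (4 * τ)))

/-- The solution of the heat equation with initial datum `g`. -/
noncomputable def heatFlow (g : ℝ → ℝ) (τ x : ℝ) : ℝ :=
  ∫ ξ, g (x + √(2 * τ) * ξ) ∂gaussianReal 0 1

section heatKernel

variable {τ τ₀ x : ℝ}

theorem heatKernel_nonneg : 0 ≤ heatKernel τ x := by
  unfold heatKernel; positivity

theorem heatKernel_le (hτ : 0 < τ) : heatKernel τ x ≤ (√(4 * Real.pi * τ))⁻¹ := by
  unfold heatKernel
  refine mul_le_of_le_one_right (by positivity) (Real.exp_le_one_iff.2 ?_)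
  have : 0 ≤ x ^ 2 / (4 * τ) := by positivity
  linarith

theorem continuous_heatKernel : Continuous (heatKernel τ) := by
  unfold heatKernel; fun_prop

theorem heatKernel_hasDerivAt (hτ : 0 < τ) :
    HasDerivAt (heatKernel τ) (-(x / (2 * τ)) * heatKernel τ x) x := by
  have h1 : HasDerivAt (fun x : ℝ => -(x ^ 2 / (4 * τ))) (-(2 * x / (4 * τ))) x := by
    exact (((hasDerivAt_pow 2 x).div_const (4 * τ)).neg).congr_deriv (by simp)
  refine (h1.exp.const_mul (√(4 * Real.pi * τ))⁻¹).congr_deriv ?_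
  unfold heatKernel
  field_simp
  ring

theorem heatKernel_hasDerivAt_deriv (hτ : 0 < τ) :
    HasDerivAt (fun x => -(x / (2 * τ)) * heatKernel τ x)
      ((x ^ 2 / (4 * τ ^ 2) - 1 / (2 * τ)) * heatKernel τ x) x := by
  have h1 : HasDerivAt (fun x : ℝ => -(x / (2 * τ))) (-(1 / (2 * τ))) x :=
    ((hasDerivAt_id x).div_const (2 * τ)).neg
  refine (h1.mul (heatKernel_hasDerivAt hτ)).congr_deriv ?_
  field_simp
  ring

theorem heatKernel_hasDerivAt_time (hτ : 0 < τ) :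
    HasDerivAt (fun τ => heatKernel τ x)
      ((x ^ 2 / (4 * τ ^ 2) - 1 / (2 * τ)) * heatKernel τ x) τ := by
  have hpos : 0 < 4 * Real.pi * τ := by positivity
  have h0 : HasDerivAt (fun τ => √(4 * Real.pi * τ)) _ τ :=
    (((hasDerivAt_id τ).const_mul (4 * Real.pi)).congr_deriv (mul_one _)).sqrt hpos.ne'
  have h1 := h0.inv (Real.sqrt_ne_zero'.2 hpos)
  have h2 : HasDerivAt (fun τ => -(x ^ 2 / (4 * τ))) (x ^ 2 / (4 * τ ^ 2)) τ := by
    have := ((((hasDerivAt_id τ).const_mul 4).inv (by simpa using hτ.ne')).const_mul (x ^ 2)).neg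
    simp only [div_eq_mul_inv]
    refine this.congr_deriv ?_
    simp
    field_simp
  refine (h1.mul h2.exp).congr_deriv ?_
  have hs : √(4 * Real.pi * τ) ^ 2 = 4 * Real.pi * τ := Real.sq_sqrt hpos.le
  have hs0 : √(4 * Real.pi * τ) ≠ 0 := Real.sqrt_ne_zero'.2 hpos
  simp only [id, Pi.inv_apply]
  unfold heatKernel
  rw [hs]
  field_simp
  ring

theorem abs_heatKernel_deriv_le (hτ₀ : 0 < τ₀) (hτ : τ₀ ≤ τ) :
    |-(x / (2 * τ)) * heatKernel τ x| ≤ (√(4 * Real.pi * τ₀))⁻¹ * (2 / τ₀ + 1) ∧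
    |(x ^ 2 / (4 * τ ^ 2) - 1 / (2 * τ)) * heatKernel τ x|
      ≤ (√(4 * Real.pi * τ₀))⁻¹ * (2 / τ₀ + 1) := by
  have hτp : 0 < τ := hτ₀.trans_le hτ
  have hroot : (√(4 * Real.pi * τ))⁻¹ ≤ (√(4 * Real.pi * τ₀))⁻¹ := by gcongr
  have hroot0 : 0 ≤ (√(4 * Real.pi * τ₀))⁻¹ := by positivity
  have hinv : 1 / τ ≤ 1 / τ₀ := one_div_le_one_div_of_le hτ₀ hτ
  have hinv0 : 0 < 1 / τ := by positivity
  set q := x ^ 2 / (4 * τ) with hq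
  have hq0 : 0 ≤ q := by positivity
  have he0 : 0 < Real.exp (-q) := Real.exp_pos _
  have he1 : Real.exp (-q) ≤ 1 := Real.exp_le_one_iff.2 (by linarith)
  have hqe : q * Real.exp (-q) ≤ 1 := by
    rw [Real.exp_neg, ← div_eq_mul_inv, div_le_one (Real.exp_pos _)]
    linarith [Real.add_one_le_exp q]
  have key : ∀ r, |r| * Real.exp (-q) ≤ 2 / τ₀ + 1 →
      |r * heatKernel τ x| ≤ (√(4 * Real.pi * τ₀))⁻¹ * (2 / τ₀ + 1) := by
    intro r hr
    rw [abs_mul, abs_of_nonneg heatKernel_nonneg]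
    unfold heatKernel
    rw [← hq, mul_left_comm]
    exact mul_le_mul hroot hr (by positivity) hroot0
  have h2 : 2 / τ₀ = 2 * (1 / τ₀) := by ring
  constructor
  · refine key _ ?_
    have h1 : |-(x / (2 * τ))| ≤ 1 / τ + q := by
      rw [abs_neg, abs_div, abs_of_pos (show 0 < 2 * τ by positivity), hq, ← sub_nonneg]
      have : 1 / τ + x ^ 2 / (4 * τ) - |x| / (2 * τ) = ((|x| - 1) ^ 2 + 3) / (4 * τ) := by
        rw [← sq_abs x]; field_simp; ring
      rw [this]; positivity
    calc _ ≤ (1 / τ + q) * Real.exp (-q) := by gcongr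
      _ = 1 / τ * Real.exp (-q) + q * Real.exp (-q) := by ring
      _ ≤ 1 / τ * 1 + 1 := by gcongr
      _ ≤ _ := by linarith
  · refine key _ ?_
    have h1 : |x ^ 2 / (4 * τ ^ 2) - 1 / (2 * τ)| ≤ (1 / τ) * (q + 1 / 2) := by
      have : x ^ 2 / (4 * τ ^ 2) - 1 / (2 * τ) = (1 / τ) * (q - 1 / 2) := by
        rw [hq]; field_simp
      rw [this, abs_mul, abs_of_pos hinv0]
      gcongr
      rw [abs_le]; constructor <;> linarith
    calc _ ≤ ((1 / τ) * (q + 1 / 2)) * Real.exp (-q) := by gcongr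
      _ = 1 / τ * (q * Real.exp (-q) + 1 / 2 * Real.exp (-q)) := by ring
      _ ≤ 1 / τ * (1 + 1 / 2 * 1) := by gcongr
      _ ≤ _ := by linarith

end heatKernel

section heatFlow

variable {g : ℝ → ℝ} {τ x M : ℝ}

theorem heatFlow_zero : heatFlow g 0 x = g x := by
  simp [heatFlow]

theorem heatFlow_nonneg (hg : ∀ y, 0 ≤ g y) : 0 ≤ heatFlow g τ x :=
  integral_nonneg fun _ => hg _

theorem integrable_comp_gaussian (hg : Continuous g) (hM : ∀ y, |g y| ≤ M) :
    Integrable (fun ξ => g (x + √(2 * τ) * ξ)) (gaussianReal 0 1) :=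
  Integrable.of_bound (by fun_prop) M (.of_forall fun ξ => hM _)

theorem heatFlow_le (hg : Continuous g) (hM : ∀ y, |g y| ≤ M) : heatFlow g τ x ≤ M := by
  have := integral_mono (integrable_comp_gaussian (x := x) (τ := τ) hg hM)
    (integrable_const M) fun ξ => (abs_le.1 (hM _)).2
  simpa [heatFlow] using this

theorem continuous_heatFlow (hg : Continuous g) (hM : ∀ y, |g y| ≤ M) :
    Continuous fun p : ℝ × ℝ => heatFlow g p.1 p.2 := by
  unfold heatFlow
  refine continuous_of_dominated (bound := fun _ => M) (fun p => ?_) (fun p => ?_)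
    (integrable_const M) (.of_forall fun ξ => ?_)
  · exact (hg.comp (by fun_prop)).aestronglyMeasurable
  · exact .of_forall fun ξ => hM _
  · exact hg.comp (by fun_prop)

theorem heatFlow_eq_integral (hg : Continuous g) (hτ : 0 < τ) :
    heatFlow g τ x = ∫ y, heatKernel τ (x - y) * g y := by
  have hc : (Real.toNNReal (2 * τ) : ℝ) = 2 * τ := Real.coe_toNNReal _ (by positivity)
  have hmap : (gaussianReal 0 1).map (fun ξ => x + √(2 * τ) * ξ)
      = gaussianReal x (Real.toNNReal (2 * τ)) := by
    have h1 := gaussianReal_map_const_mul (μ := 0) (v := 1) (√(2 * τ))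
    have h2 := gaussianReal_map_const_add (μ := 0) (v := Real.toNNReal (2 * τ)) x
    have hv : NNReal.mk (√(2 * τ) ^ 2) (sq_nonneg _) * 1 = Real.toNNReal (2 * τ) := by
      rw [mul_one]
      apply NNReal.eq
      rw [hc]
      exact Real.sq_sqrt (by positivity)
    rw [hv, mul_zero] at h1
    rw [← h1, zero_add, Measure.map_map (by fun_prop) (by fun_prop)] at h2
    exact h2
  have hne : Real.toNNReal (2 * τ) ≠ 0 := by
    simpa using hτ
  unfold heatFlow
  rw [← integral_map (φ := fun ξ => x + √(2 * τ) * ξ) (f := g) (by fun_prop)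
    hg.aestronglyMeasurable, hmap, integral_gaussianReal_eq_integral_smul hne]
  refine integral_congr_ae (.of_forall fun y => ?_)
  simp only [gaussianPDFReal, heatKernel, smul_eq_mul, hc]
  congr 4
  · ring_nf
  · ring_nf

theorem heatFlow_le_integral (hg : Continuous g) (hg0 : ∀ y, 0 ≤ g y) (hgi : Integrable g)
    (hτ : 0 < τ) : heatFlow g τ x ≤ (√(4 * Real.pi * τ))⁻¹ * ∫ y, g y := by
  rw [heatFlow_eq_integral hg hτ, ← integral_const_mul]
  have hle : ∀ y, heatKernel τ (x - y) * g y ≤ (√(4 * Real.pi * τ))⁻¹ * g y := fun y =>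
    mul_le_mul_of_nonneg_right (heatKernel_le hτ) (hg0 y)
  exact integral_mono_of_nonneg (.of_forall fun y => mul_nonneg heatKernel_nonneg (hg0 y))
    (hgi.const_mul _) (.of_forall hle)

/-- Differentiation under the integral against a kernel with bounded derivative. -/
theorem hasDerivAt_integral_mul_of_bound (hgi : Integrable g) {k k' : ℝ → ℝ → ℝ} {C θ : ℝ}
    {s : Set ℝ} (hs : s ∈ 𝓝 θ) (hk : ∀ θ, Continuous (k θ)) (hkb : ∀ y, |k θ y| ≤ C)
    (hk' : Continuous (k' θ)) (hb : ∀ θ ∈ s, ∀ y, |k' θ y| ≤ C)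
    (hd : ∀ θ ∈ s, ∀ y, HasDerivAt (fun θ => k θ y) (k' θ y) θ) :
    HasDerivAt (fun θ => ∫ y, k θ y * g y) (∫ y, k' θ y * g y) θ := by
  refine (hasDerivAt_integral_of_dominated_loc_of_deriv_le (bound := fun y => C * |g y|) hs
    (.of_forall fun θ => (hk θ).aestronglyMeasurable.mul hgi.1) ?_
    (hk'.aestronglyMeasurable.mul hgi.1) (.of_forall fun y θ hθ => ?_)
    (hgi.abs.const_mul C) (.of_forall fun y θ hθ => (hd θ hθ y).mul_const _)).2
  · exact hgi.bdd_mul (hk θ).aestronglyMeasurable (.of_forall hkb)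
  · rw [Real.norm_eq_abs, abs_mul]
    exact mul_le_mul_of_nonneg_right (hb θ hθ y) (abs_nonneg _)

theorem heatFlow_caloric (hg : Continuous g) (hgi : Integrable g) (hτ : 0 < τ) :
    ∃ c, HasDerivAt (fun τ => heatFlow g τ x) c τ ∧ HasSecondDerivAt (heatFlow g τ) c x := by
  have hτ2 : 0 < τ / 2 := by positivity
  have hx : ∀ x y : ℝ, HasDerivAt (fun x => x - y) 1 x := fun x y => (hasDerivAt_id x).sub_const y
  refine ⟨∫ y, (((x - y) ^ 2 / (4 * τ ^ 2) - 1 / (2 * τ)) * heatKernel τ (x - y)) * g y, ?_,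
    fun x => ∫ y, (-((x - y) / (2 * τ)) * heatKernel τ (x - y)) * g y, fun x => ?_, ?_⟩
  · have hev : (fun τ => heatFlow g τ x) =ᶠ[𝓝 τ] fun τ => ∫ y, heatKernel τ (x - y) * g y := by
      filter_upwards [lt_mem_nhds hτ] with τ' hτ'
      exact heatFlow_eq_integral hg hτ'
    refine HasDerivAt.congr_of_eventuallyEq ?_ hev
    have hcont : ∀ τ : ℝ, Continuous fun y => heatKernel τ (x - y) := fun τ =>
      continuous_heatKernel.comp (by fun_prop)
    refine hasDerivAt_integral_mul_of_bound hgi (s := Ioi (τ / 2))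
      (C := max ((√(4 * Real.pi * τ))⁻¹) ((√(4 * Real.pi * (τ / 2)))⁻¹ * (2 / (τ / 2) + 1)))
      (k := fun τ y => heatKernel τ (x - y))
      (k' := fun τ y => ((x - y) ^ 2 / (4 * τ ^ 2) - 1 / (2 * τ)) * heatKernel τ (x - y))
      (Ioi_mem_nhds (by linarith)) hcont (fun y => ?_) ?_ (fun θ hθ y => ?_) (fun θ hθ y => ?_)
    · rw [abs_of_nonneg heatKernel_nonneg]
      exact (heatKernel_le hτ).trans (le_max_left _ _)
    · exact Continuous.mul (by fun_prop) (hcont τ)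
    · exact (abs_heatKernel_deriv_le hτ2 (le_of_lt hθ)).2.trans (le_max_right _ _)
    · exact heatKernel_hasDerivAt_time (hτ2.trans hθ)
  · have hcont : ∀ x : ℝ, Continuous fun y => heatKernel τ (x - y) := fun x =>
      continuous_heatKernel.comp (by fun_prop)
    have hfun : heatFlow g τ = fun x => ∫ y, heatKernel τ (x - y) * g y :=
      funext fun x => heatFlow_eq_integral hg hτ
    rw [hfun]
    refine hasDerivAt_integral_mul_of_bound hgi (s := univ)
      (C := max ((√(4 * Real.pi * τ))⁻¹) ((√(4 * Real.pi * τ))⁻¹ * (2 / τ + 1)))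
      (k := fun x y => heatKernel τ (x - y))
      (k' := fun x y => -((x - y) / (2 * τ)) * heatKernel τ (x - y))
      univ_mem hcont (fun y => ?_) ?_ (fun θ hθ y => ?_) (fun θ hθ y => ?_)
    · rw [abs_of_nonneg heatKernel_nonneg]
      exact (heatKernel_le hτ).trans (le_max_left _ _)
    · exact Continuous.mul (by fun_prop) (hcont x)
    · exact (abs_heatKernel_deriv_le hτ le_rfl).1.trans (le_max_right _ _)
    · exact ((heatKernel_hasDerivAt hτ).comp θ (hx θ y)).congr_deriv (mul_one _)
  · have hcont : ∀ x : ℝ, Continuous fun y => heatKernel τ (x - y) := fun x =>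
      continuous_heatKernel.comp (by fun_prop)
    refine hasDerivAt_integral_mul_of_bound hgi (s := univ)
      (C := (√(4 * Real.pi * τ))⁻¹ * (2 / τ + 1))
      (k := fun x y => -((x - y) / (2 * τ)) * heatKernel τ (x - y))
      (k' := fun x y => ((x - y) ^ 2 / (4 * τ ^ 2) - 1 / (2 * τ)) * heatKernel τ (x - y))
      univ_mem (fun x => Continuous.mul (by fun_prop) (hcont x)) (fun y => ?_) ?_
      (fun θ hθ y => ?_) (fun θ hθ y => ?_)
    · exact (abs_heatKernel_deriv_le hτ le_rfl).1
    · exact Continuous.mul (by fun_prop) (hcont x)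
    · exact (abs_heatKernel_deriv_le hτ le_rfl).2
    · exact (HasDerivAt.comp θ (heatKernel_hasDerivAt_deriv hτ) (hx θ y)).congr_deriv (mul_one _)

end heatFlow

theorem heatFlow_add_nonneg_of_lsc {a b σ t₁ M : ℝ} {Z : ℝ → ℝ → ℝ} {g : ℝ → ℝ}
    (hg : Continuous g) (hgi : Integrable g) (hgM : ∀ y, |g y| ≤ M) (hg0 : ∀ y, 0 ≤ g y)
    (hlsc : LowerSemicontinuousOn (fun p : ℝ × ℝ => Z p.1 p.2) (Icc σ t₁ ×ˢ Icc a b))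
    (hbot : ∀ x ∈ Icc a b, 0 ≤ Z σ x + g x)
    (hleft : ∀ τ ∈ Icc σ t₁, 0 ≤ Z τ a) (hright : ∀ τ ∈ Icc σ t₁, 0 ≤ Z τ b)
    (hZ : ∀ τ ∈ Ioc σ t₁, ∀ x ∈ Ioo a b, ∃ D c, HasDerivAt (fun τ => Z τ x) D τ ∧
      HasSecondDerivAt (Z τ) c x ∧ c < D)
    {τ x : ℝ} (hτ : τ ∈ Icc σ t₁) (hx : x ∈ Icc a b) : 0 ≤ Z τ x + heatFlow g (τ - σ) x := by
  refine nonneg_of_parabolic_of_lowerSemicontinuousOn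
    (Z := fun τ x => Z τ x + heatFlow g (τ - σ) x) (hlsc.add ?_) ?_ ?_ ?_ ?_ hτ hx
  · have : Continuous fun p : ℝ × ℝ => heatFlow g (p.1 - σ) p.2 :=
      (continuous_heatFlow hg hgM).comp
        (((continuous_fst.sub continuous_const).prodMk continuous_snd))
    exact this.lowerSemicontinuous.lowerSemicontinuousOn _
  · intro y hy
    simpa [heatFlow_zero] using hbot y hy
  · exact fun s hs => add_nonneg (hleft s hs) (heatFlow_nonneg hg0)
  · exact fun s hs => add_nonneg (hright s hs) (heatFlow_nonneg hg0)
  · intro s hs y hy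
    obtain ⟨D, c, hD, hc, hcD⟩ := hZ s hs y hy
    obtain ⟨d, hd, hd'⟩ := heatFlow_caloric (x := y) hg hgi (sub_pos.2 hs.1)
    exact ⟨D + d, c + d, hD.add (hd.comp_sub_const s σ), hc.add hd', by linarith⟩

/-- Minimum principle on a rectangle when joint lower semicontinuity is only known on the
horizontal slices on which the function takes a negative value. -/
theorem nonneg_of_lsc_where_neg {r t₀ t₁ M : ℝ} {Z : ℝ → ℝ → ℝ}
    (hcx : ∀ τ ∈ Icc t₀ t₁, ContinuousOn (Z τ) (Icc 0 r))
    (hct : ∀ x ∈ Icc 0 r, ContinuousOn (fun τ => Z τ x) (Icc t₀ t₁))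
    (hM : ∀ τ ∈ Icc t₀ t₁, ∀ x ∈ Icc 0 r, |Z τ x| ≤ M)
    (hbot : ∀ x ∈ Icc 0 r, 0 ≤ Z t₀ x)
    (hleft : ∀ τ ∈ Icc t₀ t₁, 0 ≤ Z τ 0) (hright : ∀ τ ∈ Icc t₀ t₁, 0 ≤ Z τ r)
    (hlsc : ∀ τ ∈ Ioc t₀ t₁, (∃ x ∈ Icc 0 r, Z τ x < 0) → ∀ x ∈ Icc 0 r,
      LowerSemicontinuousAt (fun p : ℝ × ℝ => Z p.1 p.2) (τ, x))
    (hZ : ∀ τ ∈ Ioc t₀ t₁, ∀ x ∈ Ioo 0 r, ∃ D c, HasDerivAt (fun τ => Z τ x) D τ ∧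
      HasSecondDerivAt (Z τ) c x ∧ c < D)
    {τ x : ℝ} (hτ : τ ∈ Icc t₀ t₁) (hx : x ∈ Icc 0 r) : 0 ≤ Z τ x := by
  by_contra! hneg
  have hr : 0 ≤ r := hx.1.trans hx.2
  have hM0 : 0 ≤ M := (abs_nonneg _).trans (hM τ hτ x hx)
  set A : Set ℝ := {σ | σ ∈ Icc t₀ τ ∧ ∀ y ∈ Icc 0 r, 0 ≤ Z σ y} with hA
  have hsub : Icc t₀ τ ⊆ Icc t₀ t₁ := Icc_subset_Icc_right hτ.2
  have hAcl : IsClosed A := by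
    have : A = Icc t₀ τ ∩ ⋂ y ∈ Icc 0 r, (Icc t₀ τ ∩ (fun σ => Z σ y) ⁻¹' Ici 0) := by
      ext σ; simp only [hA, mem_ofPred_eq, mem_inter_iff, mem_iInter, mem_preimage, mem_Ici]
      exact ⟨fun h => ⟨h.1, fun y hy => ⟨h.1, h.2 y hy⟩⟩, fun h => ⟨h.1, fun y hy => (h.2 y hy).2⟩⟩
    rw [this]
    refine isClosed_Icc.inter (isClosed_biInter fun y hy => ?_)
    exact ((hct y hy).mono hsub).preimage_isClosed_of_isClosed isClosed_Icc isClosed_Ici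
  have hAne : A.Nonempty := ⟨t₀, left_mem_Icc.2 hτ.1, hbot⟩
  have hAbdd : BddAbove A := ⟨τ, fun σ hσ => hσ.1.2⟩
  set c := sSup A with hc
  obtain ⟨hcI, hcZ⟩ : c ∈ A := hAcl.csSup_mem hAne hAbdd
  have hcτ : c < τ := lt_of_le_of_ne hcI.2 fun h => by
    rw [h] at hcZ
    exact absurd (hcZ x hx) (not_le.2 hneg)
  have hexists : ∀ σ ∈ Ioc c τ, ∃ y ∈ Icc 0 r, Z σ y < 0 := by
    intro σ hσ
    by_contra! h
    exact absurd (le_csSup hAbdd (show σ ∈ A from ⟨⟨hcI.1.trans hσ.1.le, hσ.2⟩, h⟩))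
      (not_le.2 hσ.1)
  have hclamp : ∀ y : ℝ, max 0 (min r y) ∈ Icc 0 r := fun y =>
    ⟨le_max_left _ _, max_le hr (min_le_left _ _)⟩
  set g : ℝ → ℝ → ℝ := fun σ y => max 0 (-Z σ (max 0 (min r y))) with hgdef
  have hσI : ∀ σ ∈ Icc c τ, σ ∈ Icc t₀ t₁ := fun σ hσ =>
    ⟨hcI.1.trans hσ.1, hσ.2.trans hτ.2⟩
  have hg : ∀ σ ∈ Icc c τ, Continuous (g σ) := fun σ hσ => by
    have : Continuous fun y : ℝ => Z σ (max 0 (min r y)) :=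
      (hcx σ (hσI σ hσ)).comp_continuous (by fun_prop) hclamp
    exact continuous_const.max this.neg
  have hg0 : ∀ σ y, 0 ≤ g σ y := fun σ y => le_max_left _ _
  have hgM : ∀ σ ∈ Icc c τ, ∀ y, |g σ y| ≤ M := fun σ hσ y => by
    rw [abs_of_nonneg (hg0 σ y)]
    exact max_le hM0 ((neg_le_abs _).trans (hM σ (hσI σ hσ) _ (hclamp y)))
  have hgout : ∀ σ ∈ Icc c τ, ∀ y, y ∉ Icc 0 r → g σ y = 0 := by
    intro σ hσ y hy
    rcases not_and_or.1 hy with h | h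
    · have : max 0 (min r y) = 0 := max_eq_left ((min_le_right _ _).trans (not_le.1 h).le)
      simp only [hgdef, this]
      exact max_eq_left (neg_nonpos.2 (hleft σ (hσI σ hσ)))
    · have : max 0 (min r y) = r := by rw [min_eq_left (not_le.1 h).le, max_eq_right hr]
      simp only [hgdef, this]
      exact max_eq_left (neg_nonpos.2 (hright σ (hσI σ hσ)))
  have hgi : ∀ σ ∈ Icc c τ, Integrable (g σ) := fun σ hσ =>
    (hg σ hσ).integrable_of_hasCompactSupport
      (HasCompactSupport.intro isCompact_Icc fun y hy => hgout σ hσ y hy)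
  have hlower : ∀ σ ∈ Ioo c τ, 0 ≤ Z τ x + (√(4 * Real.pi * (τ - σ)))⁻¹ * ∫ y, g σ y := by
    intro σ hσ
    have hσ' : σ ∈ Icc c τ := ⟨hσ.1.le, hσ.2.le⟩
    have h1 := heatFlow_add_nonneg_of_lsc (Z := Z) (hg σ hσ') (hgi σ hσ') (hgM σ hσ') (hg0 σ)
      (a := 0) (b := r) (t₁ := τ) (σ := σ) ?_ ?_ ?_ ?_ ?_ (right_mem_Icc.2 hσ.2.le) hx
    · exact h1.trans (add_le_add_right
        (heatFlow_le_integral (hg σ hσ') (hg0 σ) (hgi σ hσ') (sub_pos.2 hσ.2)) _)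
    · rintro ⟨s, y⟩ ⟨hs, hy⟩
      have hs' : s ∈ Ioc c τ := ⟨hσ.1.trans_le hs.1, hs.2⟩
      exact (hlsc s ⟨hcI.1.trans_lt hs'.1, hs.2.trans hτ.2⟩ (hexists s hs') y
        hy).lowerSemicontinuousWithinAt _
    · intro y hy
      have : max 0 (min r y) = y := by rw [min_eq_right hy.2, max_eq_right hy.1]
      have h2 : -Z σ y ≤ g σ y := by
        simp only [hgdef, this]
        exact le_max_right _ _
      linarith
    · exact fun s hs => hleft s (hσI s ⟨hσ.1.le.trans hs.1, hs.2⟩)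
    · exact fun s hs => hright s (hσI s ⟨hσ.1.le.trans hs.1, hs.2⟩)
    · exact fun s hs y hy => hZ s
        ⟨hcI.1.trans_lt (hσ.1.trans hs.1), hs.2.trans hτ.2⟩ y hy
  have hmem : Ioo c τ ∈ 𝓝[>] c := Ioo_mem_nhdsGT hcτ
  have hlim : Tendsto (fun σ => ∫ y, g σ y) (𝓝[>] c) (𝓝 (∫ _ : ℝ, (0 : ℝ))) := by
    refine tendsto_integral_filter_of_dominated_convergence
      (indicator (Icc 0 r) fun _ => M) ?_ ?_ ?_ ?_
    · filter_upwards [hmem] with σ hσ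
      exact (hg σ ⟨hσ.1.le, hσ.2.le⟩).aestronglyMeasurable
    · filter_upwards [hmem] with σ hσ
      refine .of_forall fun y => ?_
      by_cases hy : y ∈ Icc 0 r
      · rw [indicator_of_mem hy]
        exact hgM σ ⟨hσ.1.le, hσ.2.le⟩ y
      · rw [indicator_of_notMem hy, hgout σ ⟨hσ.1.le, hσ.2.le⟩ y hy, norm_zero]
    · exact (integrable_indicator_iff measurableSet_Icc).2 (by simp)
    · refine .of_forall fun y => ?_
      have h1 : Tendsto (fun σ => Z σ (max 0 (min r y))) (𝓝[>] c)
          (𝓝 (Z c (max 0 (min r y)))) :=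
        ((hct _ (hclamp y)).continuousWithinAt (hσI c ⟨le_rfl, hcτ.le⟩)).mono_left
          (nhdsWithin_le_iff.2 (mem_of_superset hmem
            fun σ hσ => hσI σ ⟨hσ.1.le, hσ.2.le⟩))
      have h2 := (tendsto_const_nhds (x := (0 : ℝ))).max h1.neg
      rwa [max_eq_left (neg_nonpos.2 (hcZ _ (hclamp y)))] at h2
  have hroot : Tendsto (fun σ => (√(4 * Real.pi * (τ - σ)))⁻¹) (𝓝[>] c)
      (𝓝 (√(4 * Real.pi * (τ - c)))⁻¹) := by
    have : 0 < 4 * Real.pi * (τ - c) := mul_pos (by positivity) (sub_pos.2 hcτ)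
    refine Tendsto.mono_left ?_ nhdsWithin_le_nhds
    refine Tendsto.inv₀ ?_ (Real.sqrt_ne_zero'.2 this)
    exact Continuous.tendsto (by fun_prop : Continuous fun σ => √(4 * Real.pi * (τ - σ))) c
  have hfin := (hroot.mul hlim).const_add (Z τ x)
  have := ge_of_tendsto hfin (mem_of_superset hmem hlower)
  simp at this
  linarith

/-- Bounded, separately regular functions on `(0,T) × ℝ` with `∂ₜz - ∂ₓ²z > -C`. -/
structure IsBoundedSupersolution (z : ℝ → ℝ → ℝ) (T N C : ℝ) : Prop where
  const_nonneg : 0 ≤ C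
  norm_le : ∀ s ∈ Ioo 0 T, ∀ x, |z s x| ≤ N
  ineq : ∀ s ∈ Ioo 0 T, ∀ x, ∃ D c, HasDerivAt (fun τ => z τ x) D s ∧
    HasSecondDerivAt (z s) c x ∧ c - C < D

/-- A bounded function is Lipschitz at any point of differentiability. -/
theorem HasDerivAt.exists_abs_sub_le {g : ℝ → ℝ} {D a N : ℝ} {S : Set ℝ} (hg : HasDerivAt g D a)
    (ha : a ∈ S) (hN : ∀ b ∈ S, |g b| ≤ N) : ∃ K, ∀ b ∈ S, |g b - g a| ≤ K * |b - a| := by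
  obtain ⟨c, hc⟩ := hg.isBigO_sub.bound
  obtain ⟨r, hr, hball⟩ := Metric.eventually_nhds_iff.1 hc
  refine ⟨max c (2 * N / r), fun b hb => ?_⟩
  rcases lt_or_ge |b - a| r with h | h
  · refine (hball (y := b) h).trans ?_
    exact mul_le_mul_of_nonneg_right (le_max_left _ _) (abs_nonneg _)
  · have hN0 : 0 ≤ N := (abs_nonneg _).trans (hN a ha)
    calc |g b - g a| ≤ |g b| + |g a| := abs_sub _ _
      _ ≤ 2 * N := by linarith [hN b hb, hN a ha]
      _ = 2 * N / r * r := by field_simp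
      _ ≤ 2 * N / r * |b - a| := by gcongr
      _ ≤ _ := mul_le_mul_of_nonneg_right (le_max_right _ _) (abs_nonneg _)

namespace IsBoundedSupersolution

variable {z : ℝ → ℝ → ℝ} {T N C : ℝ}

theorem continuousAt_time (h : IsBoundedSupersolution z T N C) {s : ℝ} (hs : s ∈ Ioo 0 T)
    (x : ℝ) : ContinuousAt (fun τ => z τ x) s := by
  obtain ⟨D, c, hD, -, -⟩ := h.ineq s hs x
  exact hD.continuousAt

theorem continuous_space (h : IsBoundedSupersolution z T N C) {s : ℝ} (hs : s ∈ Ioo 0 T) :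
    Continuous (z s) := by
  obtain ⟨D, c, -, ⟨f', hf', -⟩, -⟩ := h.ineq s hs 0
  exact continuous_iff_continuousAt.2 fun y => (hf' y).continuousAt

/-- `z` is Lipschitz at `p` along the horizontal and the vertical line through `p`. -/
def LipschitzCross (z : ℝ → ℝ → ℝ) (T K : ℝ) (p : ℝ × ℝ) : Prop :=
  (∀ s ∈ Ioo 0 T, |z s p.2 - z p.1 p.2| ≤ K * |s - p.1|) ∧
    ∀ y, |z p.1 y - z p.1 p.2| ≤ K * |y - p.2|

theorem exists_lipschitzCross (h : IsBoundedSupersolution z T N C) {p : ℝ × ℝ}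
    (hp : p.1 ∈ Ioo 0 T) : ∃ n : ℕ, LipschitzCross z T n p := by
  obtain ⟨D, c, hD, ⟨f', hf', -⟩, -⟩ := h.ineq p.1 hp p.2
  obtain ⟨K₁, hK₁⟩ := hD.exists_abs_sub_le hp fun b hb => h.norm_le b hb p.2
  obtain ⟨K₂, hK₂⟩ := (hf' p.2).exists_abs_sub_le (mem_univ _) fun b _ => h.norm_le p.1 hp b
  obtain ⟨n, hn⟩ := exists_nat_ge (max K₁ K₂)
  refine ⟨n, fun s hs => (hK₁ s hs).trans ?_, fun y => (hK₂ y (mem_univ _)).trans ?_⟩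
  · exact mul_le_mul_of_nonneg_right ((le_max_left _ _).trans hn) (abs_nonneg _)
  · exact mul_le_mul_of_nonneg_right ((le_max_right _ _).trans hn) (abs_nonneg _)

theorem lipschitzCross_of_tendsto (h : IsBoundedSupersolution z T N C) {K : ℝ} {p : ℝ × ℝ}
    {q : ℕ → ℝ × ℝ} (hq : ∀ i, LipschitzCross z T K (q i)) (hqp : Tendsto q atTop (𝓝 p))
    (hp : p.1 ∈ Ioo 0 T) : LipschitzCross z T K p := by
  have h1 : Tendsto (fun i => (q i).1) atTop (𝓝 p.1) := (continuous_fst.tendsto p).comp hqp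
  have h2 : Tendsto (fun i => (q i).2) atTop (𝓝 p.2) := (continuous_snd.tendsto p).comp hqp
  have htime : ∀ y, Tendsto (fun i => z (q i).1 y) atTop (𝓝 (z p.1 y)) := fun y =>
    (h.continuousAt_time hp y).tendsto.comp h1
  have hspace : ∀ s ∈ Ioo 0 T, Tendsto (fun i => z s (q i).2) atTop (𝓝 (z s p.2)) := fun s hs =>
    ((h.continuous_space hs).tendsto p.2).comp h2
  have hdiff : Tendsto (fun i => z (q i).1 p.2 - z (q i).1 (q i).2) atTop (𝓝 0) := by
    refine squeeze_zero_norm (fun i => (hq i).2 p.2) ?_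
    have := ((tendsto_const_nhds (x := p.2)).sub h2).abs.const_mul K
    simpa using this
  have hval : Tendsto (fun i => z (q i).1 (q i).2) atTop (𝓝 (z p.1 p.2)) := by
    simpa using (htime p.2).sub hdiff
  refine ⟨fun s hs => ?_, fun y => ?_⟩
  · exact le_of_tendsto_of_tendsto' ((hspace s hs).sub hval).abs
      ((tendsto_const_nhds.sub h1).abs.const_mul K) fun i => (hq i).1 s hs
  · exact le_of_tendsto_of_tendsto' ((htime y).sub hval).abs
      ((tendsto_const_nhds.sub h2).abs.const_mul K) fun i => (hq i).2 y

/-- One-sided lower bound near a point with the cross Lipschitz property. -/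
theorem lower_bound_near (h : IsBoundedSupersolution z T N C) {K e η δ r σ : ℝ} {p : ℝ × ℝ}
    (hK : 0 ≤ K) (hσ : |σ| = 1) (hδ : 0 < δ) (hδe : δ < e) (hr : 0 < r) (hre : r < e) (hη : 0 < η)
    (hball : ∀ q, dist q p < e → q.1 ∈ Ioo 0 T ∧
      (LowerSemicontinuousAt (fun p : ℝ × ℝ => z p.1 p.2) q ∨ LipschitzCross z T K q))
    (hp : LipschitzCross z T K p) (hKδ : K * δ ≤ η / 8) (hKr : K * r ≤ η / 8)
    (hbot : ∀ y, |y - p.2| ≤ r → z (p.1 - δ) p.2 - η / 8 ≤ z (p.1 - δ) y)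
    {τ θ : ℝ} (hτ : τ ∈ Icc (p.1 - δ) (p.1 + δ)) (hθ : θ ∈ Icc 0 r) :
    0 ≤ (z τ (p.2 + σ * θ)) + ((η / 2 - z p.1 p.2 + 2 * N / r * θ) + C * (τ - (p.1 - δ))) := by
  have hσ2 : σ ^ 2 = 1 := by rw [← sq_abs, hσ, one_pow]
  have hpT : p.1 ∈ Ioo 0 T := (hball p (by simpa using hδ.trans hδe)).1
  have hN0 : 0 ≤ N := (abs_nonneg _).trans (h.norm_le p.1 hpT 0)
  have habs : ∀ θ ∈ Icc 0 r, |σ * θ| = θ := fun θ hθ => by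
    rw [abs_mul, hσ, one_mul, abs_of_nonneg hθ.1]
  have htime : ∀ τ ∈ Icc (p.1 - δ) (p.1 + δ), |τ - p.1| ≤ δ := fun τ hτ => by
    rw [abs_le]; constructor <;> linarith [hτ.1, hτ.2]
  have hdist : ∀ τ ∈ Icc (p.1 - δ) (p.1 + δ), ∀ θ ∈ Icc 0 r,
      dist (τ, p.2 + σ * θ) p < e := by
    intro τ hτ θ hθ
    rw [Prod.dist_eq, max_lt_iff, Real.dist_eq, Real.dist_eq]
    refine ⟨(htime τ hτ).trans_lt hδe, ?_⟩
    rw [show p.2 + σ * θ - p.2 = σ * θ by ring, habs θ hθ]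
    exact hθ.2.trans_lt hre
  have hT : ∀ τ ∈ Icc (p.1 - δ) (p.1 + δ), τ ∈ Ioo 0 T := fun τ hτ =>
    (hball _ (hdist τ hτ 0 (left_mem_Icc.2 hr.le))).1
  have hCτ : ∀ τ ∈ Icc (p.1 - δ) (p.1 + δ),
      0 ≤ C * (τ - (p.1 - δ)) ∧ C * (τ - (p.1 - δ)) ≤ C * (2 * δ) := fun τ hτ =>
    ⟨mul_nonneg h.const_nonneg (by linarith [hτ.1]),
      mul_le_mul_of_nonneg_left (by linarith [hτ.2]) h.const_nonneg⟩
  have hNθ : ∀ θ ∈ Icc 0 r, 0 ≤ 2 * N / r * θ ∧ 2 * N / r * θ ≤ 2 * N := fun θ hθ => by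
    refine ⟨mul_nonneg (by positivity) hθ.1, ?_⟩
    calc 2 * N / r * θ ≤ 2 * N / r * r := by gcongr; exact hθ.2
      _ = 2 * N := by field_simp
  have hvert : ∀ τ ∈ Icc (p.1 - δ) (p.1 + δ), z p.1 p.2 - η / 8 ≤ z τ p.2 := fun τ hτ => by
    have h1 := hp.1 τ (hT τ hτ)
    have h2 : K * |τ - p.1| ≤ K * δ := by gcongr; exact htime τ hτ
    linarith [(abs_le.1 h1).1]
  refine nonneg_of_lsc_where_neg (t₀ := p.1 - δ) (t₁ := p.1 + δ) (r := r)
    (Z := fun τ θ => (z τ (p.2 + σ * θ)) +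
      ((η / 2 - z p.1 p.2 + 2 * N / r * θ) + C * (τ - (p.1 - δ))))
    (M := N + ((η / 2 + N + 2 * N) + C * (2 * δ))) ?_ ?_ ?_ ?_ ?_ ?_ ?_ ?_ hτ hθ
  · intro τ hτ
    have := (h.continuous_space (hT τ hτ)).comp (by fun_prop : Continuous fun θ => p.2 + σ * θ)
    exact (this.add (by fun_prop)).continuousOn
  · intro θ hθ τ hτ
    exact ((h.continuousAt_time (hT τ hτ) _).add
      (Continuous.continuousAt (by fun_prop))).continuousWithinAt
  · intro τ hτ θ hθ
    have h1 := abs_le.1 (h.norm_le τ (hT τ hτ) (p.2 + σ * θ))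
    have h2 := abs_le.1 (h.norm_le p.1 hpT p.2)
    have h3 := hNθ θ hθ
    have h4 := hCτ τ hτ
    rw [abs_le]
    constructor <;> linarith
  · intro θ hθ
    have h1 := hbot (p.2 + σ * θ) (by
      rw [show p.2 + σ * θ - p.2 = σ * θ by ring, habs θ hθ]; exact hθ.2)
    have h2 := hvert (p.1 - δ) (left_mem_Icc.2 (by linarith))
    have h3 := hNθ θ hθ
    simp only [sub_self, mul_zero]
    linarith
  · intro τ hτ
    have h2 := hvert τ hτ
    have h4 := hCτ τ hτ
    simp only [mul_zero, add_zero]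
    linarith
  · intro τ hτ
    have h1 := abs_le.1 (h.norm_le τ (hT τ hτ) (p.2 + σ * r))
    have h2 := abs_le.1 (h.norm_le p.1 hpT p.2)
    have h3 : 2 * N / r * r = 2 * N := by field_simp
    have h4 := hCτ τ hτ
    simp only [h3]
    linarith
  · rintro τ hτ' ⟨θ', hθ', hneg⟩ θ hθ
    have hτ : τ ∈ Icc (p.1 - δ) (p.1 + δ) := ⟨hτ'.1.le, hτ'.2⟩
    rcases (hball _ (hdist τ hτ θ hθ)).2 with hl | hl
    · refine LowerSemicontinuousAt.add
        (f := fun q : ℝ × ℝ => z q.1 (p.2 + σ * q.2)) (fun y hy => ?_)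
        (Continuous.continuousAt (by fun_prop)).lowerSemicontinuousAt
      have hc : Continuous fun q : ℝ × ℝ => (q.1, p.2 + σ * q.2) := by fun_prop
      exact (hc.tendsto (τ, θ)).eventually (hl y hy)
    · exfalso
      have h1 := hl.2 (p.2 + σ * θ')
      have h2 := hl.1 p.1 hpT
      have h3 := hp.2 (p.2 + σ * θ)
      simp only at h1 h2 h3
      have e1 : K * |p.2 + σ * θ' - (p.2 + σ * θ)| ≤ K * r := by
        rw [show p.2 + σ * θ' - (p.2 + σ * θ) = σ * (θ' - θ) by ring, abs_mul, hσ, one_mul]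
        gcongr
        rw [abs_le]; constructor <;> linarith [hθ.1, hθ.2, hθ'.1, hθ'.2]
      have e2 : K * |p.1 - τ| ≤ K * δ := by
        rw [abs_sub_comm]; gcongr; exact htime τ hτ
      have e3 : K * |p.2 + σ * θ - p.2| ≤ K * r := by
        rw [show p.2 + σ * θ - p.2 = σ * θ by ring, habs θ hθ]; gcongr; exact hθ.2
      have h5 := hNθ θ' hθ'
      have h6 := hCτ τ hτ
      linarith [(abs_le.1 h1).1, (abs_le.1 h2).2, (abs_le.1 h3).1]
  · intro τ hτ' θ hθ
    have hτ : τ ∈ Icc (p.1 - δ) (p.1 + δ) := ⟨hτ'.1.le, hτ'.2⟩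
    obtain ⟨D, c, hD, hc, hcD⟩ := h.ineq τ (hT τ hτ) (p.2 + σ * θ)
    refine ⟨D + C, c + 0, ?_, (hc.comp_affine hσ2).add ?_, by linarith⟩
    · refine hD.add ?_
      exact ((((hasDerivAt_id τ).sub_const (p.1 - δ)).const_mul C).const_add _).congr_deriv (by simp)
    · have := HasSecondDerivAt.quadratic
        (η / 2 - z p.1 p.2 + C * (τ - (p.1 - δ))) (2 * N / r) 0 θ
      simp only [mul_zero, zero_mul, add_zero] at this
      convert this using 2
      ring

theorem lowerSemicontinuousAt_of_lipschitzCross (h : IsBoundedSupersolution z T N C) {K : ℝ}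
    (hK : 0 ≤ K) {p : ℝ × ℝ} (hp : LipschitzCross z T K p)
    (hnear : ∀ᶠ q in 𝓝 p, q.1 ∈ Ioo 0 T ∧
      (LowerSemicontinuousAt (fun p : ℝ × ℝ => z p.1 p.2) q ∨ LipschitzCross z T K q)) :
    LowerSemicontinuousAt (fun p : ℝ × ℝ => z p.1 p.2) p := by
  intro y hy
  obtain ⟨e, he, hball⟩ := Metric.eventually_nhds_iff.1 hnear
  have hpT : p.1 ∈ Ioo 0 T := (hnear.self_of_nhds).1
  have hN0 : 0 ≤ N := (abs_nonneg _).trans (h.norm_le p.1 hpT 0)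
  set η := z p.1 p.2 - y with hηdef
  have hη : 0 < η := sub_pos.2 hy
  have hC := h.const_nonneg
  obtain ⟨δ, hδ, hδe, hKδ, hCδ⟩ : ∃ δ > 0, δ < e ∧ K * δ ≤ η / 8 ∧ C * (2 * δ) ≤ η / 8 := by
    refine ⟨min (e / 2) (η / (16 * (K + C + 1))), by positivity,
      (min_le_left _ _).trans_lt (by linarith), ?_, ?_⟩
    all_goals
      have h1 : min (e / 2) (η / (16 * (K + C + 1))) ≤ η / (16 * (K + C + 1)) := min_le_right _ _
      rw [le_div_iff₀ (by positivity)] at h1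
      have h0 : 0 < min (e / 2) (η / (16 * (K + C + 1))) := by positivity
      nlinarith [mul_nonneg hK h0.le, mul_nonneg hC h0.le]
  have hδT : p.1 - δ ∈ Ioo 0 T := (hball (y := (p.1 - δ, p.2)) (by
    rw [Prod.dist_eq]; simp [abs_of_pos hδ, hδe, he])).1
  obtain ⟨r₁, hr₁, hr₁'⟩ := Metric.eventually_nhds_iff.1
    (((h.continuous_space hδT).tendsto p.2).eventually
      (lt_mem_nhds (show z (p.1 - δ) p.2 - η / 8 < z (p.1 - δ) p.2 by linarith)))
  obtain ⟨r, hr, hre, hKr, hrr₁⟩ : ∃ r > 0, r < e ∧ K * r ≤ η / 8 ∧ r < r₁ := by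
    refine ⟨min (min (e / 2) (r₁ / 2)) (η / (8 * (K + 1))), by positivity, ?_, ?_, ?_⟩
    · exact ((min_le_left _ _).trans (min_le_left _ _)).trans_lt (by linarith)
    · have h1 : min (min (e / 2) (r₁ / 2)) (η / (8 * (K + 1))) ≤ η / (8 * (K + 1)) :=
        min_le_right _ _
      have h0 : 0 < min (min (e / 2) (r₁ / 2)) (η / (8 * (K + 1))) := by positivity
      rw [le_div_iff₀ (by positivity)] at h1
      nlinarith
    · exact ((min_le_left _ _).trans (min_le_right _ _)).trans_lt (by linarith)
  have hbot : ∀ y, |y - p.2| ≤ r → z (p.1 - δ) p.2 - η / 8 ≤ z (p.1 - δ) y := fun y hy =>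
    (hr₁' (y := y) (hy.trans_lt hrr₁)).le
  have hkey : ∀ σ : ℝ, |σ| = 1 → ∀ τ ∈ Icc (p.1 - δ) (p.1 + δ), ∀ θ ∈ Icc 0 r, _ :=
    fun σ hσ τ hτ θ hθ => h.lower_bound_near hK hσ hδ hδe hr hre hη (fun q hq => hball hq) hp hKδ
      hKr hbot hτ hθ
  obtain ⟨r₂, hr₂, hr₂r, hNr₂⟩ : ∃ r₂ > 0, r₂ ≤ r ∧ 2 * N / r * r₂ ≤ η / 8 := by
    refine ⟨min r (η * r / (16 * (N + 1))), by positivity, min_le_left _ _, ?_⟩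
    have h1 : min r (η * r / (16 * (N + 1))) ≤ η * r / (16 * (N + 1)) := min_le_right _ _
    calc 2 * N / r * min r (η * r / (16 * (N + 1))) ≤ 2 * N / r * (η * r / (16 * (N + 1))) := by
          gcongr
      _ = η / 8 * (N / (N + 1)) := by field_simp; ring
      _ ≤ η / 8 * 1 := by
          gcongr
          rw [div_le_one (by linarith)]; linarith
      _ = η / 8 := mul_one _
  have hfinal : ∀ q : ℝ × ℝ, q.1 ∈ Icc (p.1 - δ) (p.1 + δ) → |q.2 - p.2| ≤ r₂ →
      y < z q.1 q.2 := by
    intro q hq1 hq2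
    obtain ⟨σ, hσ, hσq⟩ : ∃ σ : ℝ, |σ| = 1 ∧ q.2 = p.2 + σ * |q.2 - p.2| := by
      rcases le_total 0 (q.2 - p.2) with h0 | h0
      · exact ⟨1, by simp, by rw [abs_of_nonneg h0]; ring⟩
      · exact ⟨-1, by simp, by rw [abs_of_nonpos h0]; ring⟩
    have h1 := hkey σ hσ q.1 hq1 _ ⟨abs_nonneg _, hq2.trans hr₂r⟩
    rw [← hσq] at h1
    have h2 : 2 * N / r * |q.2 - p.2| ≤ 2 * N / r * r₂ := by gcongr
    have h3 : C * (q.1 - (p.1 - δ)) ≤ C * (2 * δ) :=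
      mul_le_mul_of_nonneg_left (by linarith [hq1.2]) hC
    linarith
  have hmem : Icc (p.1 - δ) (p.1 + δ) ×ˢ Metric.closedBall p.2 r₂ ∈ 𝓝 p :=
    prod_mem_nhds (Icc_mem_nhds (by linarith) (by linarith)) (Metric.closedBall_mem_nhds _ hr₂)
  filter_upwards [hmem] with q hq
  exact hfinal q hq.1 hq.2

/-- A bounded supersolution that is separately regular is jointly lower semicontinuous. -/
theorem lowerSemicontinuousAt (h : IsBoundedSupersolution z T N C) {p : ℝ × ℝ}
    (hpT : p.1 ∈ Ioo 0 T) : LowerSemicontinuousAt (fun p : ℝ × ℝ => z p.1 p.2) p := by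
  set G : Set (ℝ × ℝ) :=
    {q | ∀ᶠ q' in 𝓝 q, LowerSemicontinuousAt (fun p : ℝ × ℝ => z p.1 p.2) q'} with hG
  set Ω : Set (ℝ × ℝ) := {q | q.1 ∈ Ioo 0 T} with hΩ
  have hΩo : IsOpen Ω := isOpen_Ioo.preimage continuous_fst
  have hGo : IsOpen G := isOpen_setOfPred_eventually_nhds
  by_contra hcon
  have hEne : (Ω ∩ Gᶜ).Nonempty := ⟨p, hpT, fun hpG => hcon (Eventually.self_of_nhds hpG)⟩
  have : LocallyCompactSpace ↥(Ω ∩ Gᶜ) :=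
    (hΩo.isLocallyClosed.inter hGo.isClosed_compl.isLocallyClosed).locallyCompactSpace
  have : Nonempty ↥(Ω ∩ Gᶜ) := hEne.to_subtype
  obtain ⟨n, hn⟩ := nonempty_interior_of_iUnion_of_closed
    (f := fun n : ℕ => {q : ↥(Ω ∩ Gᶜ) | LipschitzCross z T n q.1}) (fun n => by
      refine IsSeqClosed.isClosed fun q q₀ hq hq₀ => ?_
      exact h.lipschitzCross_of_tendsto hq ((continuous_subtype_val.tendsto q₀).comp hq₀)
        q₀.2.1) (by
      refine eq_univ_of_forall fun q => mem_iUnion.2 ?_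
      exact h.exists_lipschitzCross q.2.1)
  obtain ⟨Q, hQ, hQe⟩ := isOpen_induced_iff.1 (isOpen_interior
    (s := {q : ↥(Ω ∩ Gᶜ) | LipschitzCross z T n q.1}))
  obtain ⟨q₀, hq₀⟩ := hn
  have hQE : ∀ q ∈ Q, q ∈ Ω ∩ Gᶜ → LipschitzCross z T n q := fun q hqQ hq => by
    have : (⟨q, hq⟩ : ↥(Ω ∩ Gᶜ)) ∈ interior {q : ↥(Ω ∩ Gᶜ) | LipschitzCross z T n q.1} := by
      rw [← hQe]; exact hqQ
    exact (interior_subset this : _ ∈ {q : ↥(Ω ∩ Gᶜ) | LipschitzCross z T n q.1})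
  have hq₀Q : q₀.1 ∈ Q := by
    rw [← hQe] at hq₀; exact hq₀
  refine q₀.2.2 (show q₀.1 ∈ G from ?_)
  have hQΩ : IsOpen (Q ∩ Ω) := hQ.inter hΩo
  have hor : ∀ q ∈ Q ∩ Ω, LowerSemicontinuousAt (fun p : ℝ × ℝ => z p.1 p.2) q ∨
      LipschitzCross z T n q := fun q hq => by
    by_cases hqG : q ∈ G
    · exact Or.inl (Eventually.self_of_nhds hqG)
    · exact Or.inr (hQE q hq.1 ⟨hq.2, hqG⟩)
  filter_upwards [hQΩ.mem_nhds ⟨hq₀Q, q₀.2.1⟩] with q hq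
  rcases hor q hq with hl | hl
  · exact hl
  · exact h.lowerSemicontinuousAt_of_lipschitzCross (Nat.cast_nonneg n) hl
      (mem_of_superset (hQΩ.mem_nhds hq) fun q' hq' => ⟨hq'.2, hor q' hq'⟩)

theorem heatFlow_le_of_compactSupport (h : IsBoundedSupersolution z T N C)
    (hz0 : ∀ s ∈ Ioo 0 T, ∀ x, 0 ≤ z s x) {s₁ s₂ : ℝ} (hs₁ : 0 < s₁) (hs : s₁ ≤ s₂) (hs₂ : s₂ < T)
    {g : ℝ → ℝ} (hg : Continuous g) (hgc : HasCompactSupport g) (hg0 : ∀ y, 0 ≤ g y)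
    (hgz : ∀ y, g y ≤ z s₁ y) (x : ℝ) :
    heatFlow g (s₂ - s₁) x - C * (s₂ - s₁) ≤ z s₂ x := by
  have hT : ∀ τ ∈ Icc s₁ s₂, τ ∈ Ioo 0 T := fun τ hτ => ⟨hs₁.trans_le hτ.1, hτ.2.trans_lt hs₂⟩
  have hs₁T := hT s₁ (left_mem_Icc.2 hs)
  have hN0 : 0 ≤ N := (abs_nonneg _).trans (h.norm_le s₁ hs₁T 0)
  have hgN : ∀ y, |g y| ≤ N := fun y => by
    rw [abs_of_nonneg (hg0 y)]
    exact (hgz y).trans ((le_abs_self _).trans (h.norm_le s₁ hs₁T y))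
  have hgi : Integrable g := hg.integrable_of_hasCompactSupport hgc
  have key : ∀ L : ℝ, 0 < L → |x| ≤ L →
      0 ≤ z s₂ x + (-heatFlow g (s₂ - s₁) x +
        (C * (s₂ - s₁) + N / L ^ 2 * (x ^ 2 + 2 * (s₂ - s₁)))) := by
    intro L hL hxL
    have hedge : ∀ τ ∈ Icc s₁ s₂, ∀ y : ℝ, y ^ 2 = L ^ 2 →
        0 ≤ z τ y + (-heatFlow g (τ - s₁) y +
          (C * (τ - s₁) + N / L ^ 2 * (y ^ 2 + 2 * (τ - s₁)))) := by
      intro τ hτ y hy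
      have h1 := heatFlow_le (τ := τ - s₁) (x := y) hg hgN
      have h2 := hz0 τ (hT τ hτ) y
      have h3 : 0 ≤ C * (τ - s₁) := mul_nonneg h.const_nonneg (by linarith [hτ.1])
      have h4 : N / L ^ 2 * (y ^ 2 + 2 * (τ - s₁)) = N + N / L ^ 2 * (2 * (τ - s₁)) := by
        rw [hy]; field_simp
      have h5 : 0 ≤ N / L ^ 2 * (2 * (τ - s₁)) :=
        mul_nonneg (by positivity) (by linarith [hτ.1])
      linarith
    refine nonneg_of_parabolic_of_lowerSemicontinuousOn (t₀ := s₁) (t₁ := s₂) (a := -L) (b := L)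
      (Z := fun τ y => z τ y + (-heatFlow g (τ - s₁) y +
        (C * (τ - s₁) + N / L ^ 2 * (y ^ 2 + 2 * (τ - s₁))))) ?_ ?_ ?_ ?_ ?_
      (right_mem_Icc.2 hs) (abs_le.1 hxL)
    · rintro ⟨τ, y⟩ ⟨hτ, -⟩
      refine LowerSemicontinuousAt.lowerSemicontinuousWithinAt _
        ((h.lowerSemicontinuousAt (hT τ hτ)).add (Continuous.continuousAt ?_).lowerSemicontinuousAt)
      have : Continuous fun p : ℝ × ℝ => heatFlow g (p.1 - s₁) p.2 :=
        (continuous_heatFlow hg hgN).comp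
          (((continuous_fst.sub continuous_const).prodMk continuous_snd))
      exact this.neg.add (by fun_prop)
    · intro y hy
      have h1 := hgz y
      have h2 : 0 ≤ N / L ^ 2 * y ^ 2 := by positivity
      simp only [sub_self, heatFlow_zero, mul_zero, add_zero, zero_add]
      linarith
    · exact fun τ hτ => hedge τ hτ (-L) (by ring)
    · exact fun τ hτ => hedge τ hτ L rfl
    · intro τ hτ y hy
      have hτ' : τ ∈ Icc s₁ s₂ := ⟨hτ.1.le, hτ.2⟩
      obtain ⟨D, c, hD, hc, hcD⟩ := h.ineq τ (hT τ hτ') y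
      obtain ⟨d, hd, hd'⟩ := heatFlow_caloric (x := y) hg hgi (sub_pos.2 hτ.1)
      refine ⟨D + (-d + (C + N / L ^ 2 * 2)), c + (-d + 2 * (N / L ^ 2)),
        hD.add ((hd.comp_sub_const τ s₁).neg.add ?_), hc.add (hd'.neg.add ?_), by linarith⟩
      · have hlin := (hasDerivAt_id τ).sub_const s₁
        exact ((hlin.const_mul C).add (((hlin.const_mul 2).const_add (y ^ 2)).const_mul
          (N / L ^ 2))).congr_deriv (by simp)
      · have := HasSecondDerivAt.quadratic
          (C * (τ - s₁) + N / L ^ 2 * (2 * (τ - s₁))) 0 (N / L ^ 2) y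
        convert this using 2
        ring
  have hlim : Tendsto (fun L : ℝ => z s₂ x + (-heatFlow g (s₂ - s₁) x +
      (C * (s₂ - s₁) + N / L ^ 2 * (x ^ 2 + 2 * (s₂ - s₁))))) atTop
      (𝓝 (z s₂ x + (-heatFlow g (s₂ - s₁) x +
      (C * (s₂ - s₁) + 0 * (x ^ 2 + 2 * (s₂ - s₁)))))) := by
    have : Tendsto (fun L : ℝ => N / L ^ 2) atTop (𝓝 0) :=
      tendsto_const_nhds.div_atTop (tendsto_pow_atTop two_ne_zero)
    exact (((this.mul_const _).const_add _).const_add _).const_add _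
  have := ge_of_tendsto hlim (by
    filter_upwards [eventually_gt_atTop 0, eventually_ge_atTop |x|] with L hL hxL
    exact key L hL hxL)
  linarith

/-- A nonnegative bounded supersolution dominates the heat flow of its past values. -/
theorem heatFlow_le (h : IsBoundedSupersolution z T N C)
    (hz0 : ∀ s ∈ Ioo 0 T, ∀ x, 0 ≤ z s x) {s₁ s₂ : ℝ} (hs₁ : 0 < s₁) (hs : s₁ ≤ s₂) (hs₂ : s₂ < T)
    (x : ℝ) : heatFlow (z s₁) (s₂ - s₁) x - C * (s₂ - s₁) ≤ z s₂ x := by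
  have hs₁T : s₁ ∈ Ioo 0 T := ⟨hs₁, hs.trans_lt hs₂⟩
  have hzc := h.continuous_space hs₁T
  set χ : ℕ → ℝ → ℝ := fun k y => max 0 (min 1 (k + 1 - |y|)) with hχ
  have hχc : ∀ k, Continuous (χ k) := fun k => by simp only [hχ]; fun_prop
  have hχ0 : ∀ k y, 0 ≤ χ k y := fun k y => le_max_left _ _
  have hχ1 : ∀ k y, χ k y ≤ 1 := fun k y => max_le zero_le_one (min_le_left _ _)
  have hle : ∀ k y, χ k y * z s₁ y ≤ z s₁ y := fun k y =>
    mul_le_of_le_one_left (hz0 s₁ hs₁T y) (hχ1 k y)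
  have h0 : ∀ k y, 0 ≤ χ k y * z s₁ y := fun k y => mul_nonneg (hχ0 k y) (hz0 s₁ hs₁T y)
  have hbound : ∀ k : ℕ, heatFlow (fun y => χ k y * z s₁ y) (s₂ - s₁) x - C * (s₂ - s₁)
      ≤ z s₂ x := by
    intro k
    refine h.heatFlow_le_of_compactSupport hz0 hs₁ hs hs₂ ((hχc k).mul hzc) ?_ (h0 k) (hle k) x
    refine HasCompactSupport.mul_right (HasCompactSupport.intro
      (isCompact_Icc (a := -((k : ℝ) + 1)) (b := k + 1)) fun y hy => ?_)
    have hy' : (k : ℝ) + 1 ≤ |y| := by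
      by_contra! hlt
      exact hy ⟨(abs_lt.1 hlt).1.le, (abs_lt.1 hlt).2.le⟩
    exact max_eq_left ((min_le_right _ _).trans (by linarith))
  have hlim : Tendsto (fun k => heatFlow (fun y => χ k y * z s₁ y) (s₂ - s₁) x) atTop
      (𝓝 (heatFlow (z s₁) (s₂ - s₁) x)) := by
    unfold heatFlow
    refine tendsto_integral_of_dominated_convergence (fun _ => N) (fun k => ?_)
      (integrable_const N) (fun k => .of_forall fun ξ => ?_) (.of_forall fun ξ => ?_)
    · have : Continuous fun y => χ k y * z s₁ y := (hχc k).mul hzc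
      exact (this.comp (by fun_prop)).aestronglyMeasurable
    · rw [Real.norm_eq_abs, abs_of_nonneg (h0 k _)]
      exact (hle k _).trans ((le_abs_self _).trans (h.norm_le s₁ hs₁T _))
    · refine tendsto_const_nhds.congr' ?_
      filter_upwards [tendsto_natCast_atTop_atTop.eventually_ge_atTop
        |x + √(2 * (s₂ - s₁)) * ξ|] with k hk
      have : χ k (x + √(2 * (s₂ - s₁)) * ξ) = 1 := by
        simp only [hχ]
        rw [min_eq_left (by linarith), max_eq_right zero_le_one]
      rw [this, one_mul]
  exact le_of_tendsto (hlim.sub_const _) (.of_forall hbound)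

end IsBoundedSupersolution

theorem integral_sq_gaussianReal_zero_one : ∫ ξ, ξ ^ 2 ∂gaussianReal 0 1 = 1 := by
  have h := variance_fun_id_gaussianReal (μ := 0) (v := 1)
  rw [variance_of_integral_eq_zero (by fun_prop) (by simp [integral_id_gaussianReal])] at h
  simpa using h

/-- The generator of the heat flow is the second derivative. -/
theorem HasSecondDerivAt.tendsto_heatFlow {Φ : ℝ → ℝ} {c x M : ℝ} (h : HasSecondDerivAt Φ c x)
    (hM : ∀ y, |Φ y| ≤ M) :
    Tendsto (fun τ => (heatFlow Φ τ x - Φ x) / τ) (𝓝[>] 0) (𝓝 c) := by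
  obtain ⟨Φ', hΦ', -⟩ := id h
  have hΦ : Continuous Φ := continuous_iff_continuousAt.2 fun y => (hΦ' y).continuousAt
  set b := Φ' x with hb
  set R : ℝ → ℝ := fun k => Φ (x + k) - Φ x - k * b with hR
  have htay : Tendsto (fun k => R k / k ^ 2) (𝓝[≠] 0) (𝓝 (c / 2)) := h.tendsto_taylor (hΦ' x)
  have hRc : Continuous R := by
    have : Continuous fun k => Φ (x + k) := hΦ.comp (by fun_prop)
    exact (this.sub continuous_const).sub (by fun_prop)
  have hM0 : 0 ≤ M := (abs_nonneg _).trans (hM 0)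
  obtain ⟨K, hK⟩ : ∃ K, ∀ k, |R k| ≤ K * k ^ 2 := by
    have hev := htay.abs.eventually (gt_mem_nhds (lt_add_one _))
    rw [eventually_nhdsWithin_iff] at hev
    obtain ⟨r, hr, hball⟩ := Metric.eventually_nhds_iff.1 hev
    refine ⟨max (|c / 2| + 1) (2 * M / r ^ 2 + |b| / r), fun k => ?_⟩
    rcases eq_or_ne k 0 with rfl | hk0
    · simp [hR]
    have hk2 : 0 < k ^ 2 := by positivity
    rcases lt_or_ge |k| r with hk | hk
    · have h1 := hball (y := k) (by simpa using hk) hk0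
      rw [abs_div, abs_of_pos hk2, div_lt_iff₀ hk2] at h1
      exact h1.le.trans (mul_le_mul_of_nonneg_right (le_max_left _ _) hk2.le)
    · have h1 : |R k| ≤ 2 * M + |k| * |b| := by
        calc |R k| ≤ |Φ (x + k) - Φ x| + |k * b| := abs_sub _ _
          _ ≤ (|Φ (x + k)| + |Φ x|) + |k| * |b| := by
            rw [abs_mul]; gcongr; exact abs_sub _ _
          _ ≤ _ := by linarith [hM (x + k), hM x]
      have h2 : 2 * M ≤ 2 * M / r ^ 2 * k ^ 2 := by
        rw [← sq_abs k, div_mul_eq_mul_div, le_div_iff₀ (by positivity)]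
        gcongr
      have h3 : |k| * |b| ≤ |b| / r * k ^ 2 := by
        rw [← sq_abs k, div_mul_eq_mul_div, le_div_iff₀ hr, sq]
        nlinarith [mul_nonneg (abs_nonneg k) (abs_nonneg b)]
      calc |R k| ≤ (2 * M / r ^ 2 + |b| / r) * k ^ 2 := by linarith
        _ ≤ _ := mul_le_mul_of_nonneg_right (le_max_right _ _) hk2.le
  have hsq : ∀ τ : ℝ, 0 < τ → √(2 * τ) ^ 2 = 2 * τ := fun τ hτ => Real.sq_sqrt (by positivity)
  have hid : Integrable (fun ξ : ℝ => ξ) (gaussianReal 0 1) :=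
    (memLp_id_gaussianReal 1).integrable (by simp)
  have hsqi : Integrable (fun ξ : ℝ => ξ ^ 2) (gaussianReal 0 1) :=
    (memLp_id_gaussianReal 2).integrable_sq
  have hrepr : ∀ τ : ℝ, 0 < τ →
      (heatFlow Φ τ x - Φ x) / τ = ∫ ξ, R (√(2 * τ) * ξ) / τ ∂gaussianReal 0 1 := by
    intro τ hτ
    rw [integral_div]
    congr 1
    simp only [hR]
    have hi1 := integrable_comp_gaussian (x := x) (τ := τ) hΦ hM
    have hi2 : Integrable (fun ξ => Φ (x + √(2 * τ) * ξ) - Φ x) (gaussianReal 0 1) :=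
      hi1.sub (integrable_const _)
    rw [integral_sub hi2 ((hid.const_mul _).mul_const _),
      integral_sub hi1 (integrable_const _), integral_mul_const, integral_const_mul,
      integral_id_gaussianReal]
    simp [heatFlow]
  have hlim : Tendsto (fun τ => ∫ ξ, R (√(2 * τ) * ξ) / τ ∂gaussianReal 0 1) (𝓝[>] 0)
      (𝓝 (∫ ξ, c * ξ ^ 2 ∂gaussianReal 0 1)) := by
    refine tendsto_integral_filter_of_dominated_convergence (fun ξ => 2 * K * ξ ^ 2)
      (.of_forall fun τ => ?_) ?_ (hsqi.const_mul _) (.of_forall fun ξ => ?_)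
    · exact ((hRc.comp (by fun_prop)).div_const τ).aestronglyMeasurable
    · filter_upwards [self_mem_nhdsWithin] with τ hτ
      have hτ : 0 < τ := hτ
      refine .of_forall fun ξ => ?_
      rw [Real.norm_eq_abs, abs_div, abs_of_pos hτ, div_le_iff₀ hτ]
      refine (hK _).trans (le_of_eq ?_)
      rw [mul_pow, hsq τ hτ]; ring
    · rcases eq_or_ne ξ 0 with rfl | hξ
      · simp [hR]
      have h0 : Tendsto (fun τ => √(2 * τ) * ξ) (𝓝[>] 0) (𝓝[≠] 0) := by
        refine tendsto_nhdsWithin_iff.2 ⟨?_, ?_⟩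
        · have : Continuous fun τ => √(2 * τ) * ξ := by fun_prop
          simpa using (this.tendsto 0).mono_left nhdsWithin_le_nhds
        · filter_upwards [self_mem_nhdsWithin] with τ hτ
          have hτ : 0 < τ := hτ
          exact mul_ne_zero (Real.sqrt_ne_zero'.2 (by positivity)) hξ
      have h1 := (htay.comp h0).mul_const (2 * ξ ^ 2)
      rw [show c / 2 * (2 * ξ ^ 2) = c * ξ ^ 2 by ring] at h1
      refine h1.congr' ?_
      filter_upwards [self_mem_nhdsWithin] with τ hτ
      have hτ : 0 < τ := hτ
      simp only [Function.comp_apply]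
      rw [mul_pow, hsq τ hτ]
      field_simp
  rw [integral_const_mul, integral_sq_gaussianReal_zero_one, mul_one] at hlim
  refine hlim.congr' ?_
  filter_upwards [self_mem_nhdsWithin] with τ hτ
  exact (hrepr τ hτ).symm

theorem continuous_integral_translate_mul {ζ ρ : ℝ → ℝ} {N : ℝ} (hζ : Continuous ζ)
    (hN : ∀ x, |ζ x| ≤ N) (hρ : Integrable ρ) : Continuous fun y => ∫ x, ζ (x + y) * ρ x := by
  refine continuous_of_dominated (bound := fun x => N * |ρ x|) (fun y => ?_)
    (fun y => .of_forall fun x => ?_) (hρ.abs.const_mul N) (.of_forall fun x => ?_)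
  · exact (hζ.comp (by fun_prop)).aestronglyMeasurable.mul hρ.1
  · rw [Real.norm_eq_abs, abs_mul]
    exact mul_le_mul_of_nonneg_right (hN _) (abs_nonneg _)
  · exact (hζ.comp (by fun_prop)).mul continuous_const

/-- Derivatives of a correlation fall on the smooth integrable factor. -/
theorem hasDerivAt_integral_translate_mul {ζ ρ ρ' : ℝ → ℝ} {N : ℝ} (hζ : Continuous ζ)
    (hN : ∀ x, |ζ x| ≤ N) (hρ : Integrable ρ) (hρ' : Integrable ρ') (hc : Continuous ρ')
    (hd : ∀ x, HasDerivAt ρ (ρ' x) x) (y : ℝ) :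
    HasDerivAt (fun y => ∫ x, ζ (x + y) * ρ x) (-∫ x, ζ (x + y) * ρ' x) y := by
  have hρc : Continuous ρ := continuous_iff_continuousAt.2 fun x => (hd x).continuousAt
  have hshift : ∀ (k : ℝ → ℝ) (y : ℝ), ∫ x, ζ (x + y) * k x = ∫ x, ζ x * k (x - y) := by
    intro k y
    rw [← integral_add_right_eq_self (fun x => ζ x * k (x - y)) y]
    simp
  have hint : ∀ k : ℝ → ℝ, Integrable k → ∀ y, Integrable fun x => ζ x * k (x - y) :=
    fun k hk y => (hk.comp_sub_right y).bdd_mul hζ.aestronglyMeasurable (.of_forall hN)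
  have hprim : ∀ y, ∫ x, ζ (x + y) * ρ x =
      (∫ x, ζ x * ρ x) - ∫ a in (0 : ℝ)..y, ∫ x, ζ (x + a) * ρ' x := by
    intro y
    have hprod : Integrable (Function.uncurry fun x a => ζ x * ρ' (x - a))
        (volume.prod (volume.restrict (uIoc 0 y))) := by
      have hm : AEStronglyMeasurable (Function.uncurry fun x a => ζ x * ρ' (x - a))
          (volume.prod (volume.restrict (uIoc 0 y))) := by
        refine Continuous.aestronglyMeasurable ?_
        exact (hζ.comp continuous_fst).mul (hc.comp (continuous_fst.sub continuous_snd))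
      rw [integrable_prod_iff' hm]
      refine ⟨.of_forall fun a => hint ρ' hρ' a, ?_⟩
      have : IsFiniteMeasure (volume.restrict (uIoc 0 y)) := by
        rw [uIoc]; infer_instance
      refine Integrable.of_bound hm.prod_swap.norm.integral_prod_right' (N * ∫ x, |ρ' x|)
        (.of_forall fun a => ?_)
      rw [Real.norm_eq_abs, abs_of_nonneg (integral_nonneg fun x => norm_nonneg _),
        ← integral_const_mul, ← integral_sub_right_eq_self (fun x => N * |ρ' x|) a]
      refine integral_mono_of_nonneg (.of_forall fun x => norm_nonneg _)
        ((hρ'.comp_sub_right a).abs.const_mul N) (.of_forall fun x => ?_)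
      simp only [Function.uncurry_apply_pair, Real.norm_eq_abs, abs_mul]
      exact mul_le_mul_of_nonneg_right (hN x) (abs_nonneg _)
    have hftc : ∀ x, ∫ a in (0 : ℝ)..y, ρ' (x - a) = ρ x - ρ (x - y) := by
      intro x
      rw [intervalIntegral.integral_comp_sub_left, sub_zero]
      exact intervalIntegral.integral_eq_sub_of_hasDerivAt (fun x _ => hd x)
        (hc.intervalIntegrable _ _)
    have h1 : ∫ a in (0 : ℝ)..y, ∫ x, ζ (x + a) * ρ' x = ∫ x, ζ x * (ρ x - ρ (x - y)) := by
      simp_rw [hshift ρ']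
      rw [intervalIntegral.intervalIntegral_eq_integral_uIoc, ← integral_integral_swap hprod,
        ← integral_smul]
      refine integral_congr_ae (.of_forall fun x => ?_)
      simp only
      rw [← intervalIntegral.intervalIntegral_eq_integral_uIoc,
        intervalIntegral.integral_const_mul, hftc]
    rw [h1, hshift ρ]
    simp_rw [mul_sub]
    have := hint ρ hρ 0
    simp only [sub_zero] at this
    rw [integral_sub this (hint ρ hρ y)]
    ring
  rw [show (fun y => ∫ x, ζ (x + y) * ρ x) = _ from funext hprim]
  have hcont := continuous_integral_translate_mul hζ hN hρ'
  exact (hcont.integral_hasStrictDerivAt 0 y).hasDerivAt.const_sub _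

/-- Riccati comparison: `J' ≥ J² / P` in the sense of lower right Dini derivatives. -/
theorem integral_inv_le_inv_of_riccati {J P : ℝ → ℝ} {t : ℝ}
    (hP : ∀ s ∈ Ico 0 t, 0 < P s) (hPc : ContinuousOn P (Ico 0 t))
    (hJc : ContinuousOn J (Ico 0 t)) (hJ0 : 0 < J 0)
    (hJ : ∀ s ∈ Ioo 0 t, ∀ r < J s ^ 2 / P s, ∀ᶠ τ in 𝓝[>] s, r < slope J s τ)
    {b : ℝ} (hb0 : 0 < b) (hbt : b < t) : ∫ s in (0 : ℝ)..b, (P s)⁻¹ ≤ (J 0)⁻¹ := by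
  have hsub : Icc 0 b ⊆ Ico 0 t := fun s hs => ⟨hs.1, hs.2.trans_lt hbt⟩
  have hlim0 : ∀ F : ℝ → ℝ, ContinuousOn F (Icc 0 b) → Tendsto F (𝓝[>] 0) (𝓝 (F 0)) :=
    fun F hF => (hF 0 (left_mem_Icc.2 hb0.le)).mono_left
      (nhdsWithin_le_iff.2 (mem_of_superset (Ioo_mem_nhdsGT hb0) Ioo_subset_Icc_self))
  have hmono : ∀ a ∈ Ioo 0 b, ∀ s ∈ Icc a b, J a ≤ J s := by
    intro a ha s hs
    have hab : Icc a b ⊆ Ico 0 t := fun s hs => hsub ⟨ha.1.le.trans hs.1, hs.2⟩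
    have := image_le_of_liminf_slope_right_le_deriv_boundary (f := fun s => -J s)
      (B := fun _ => -J a) (B' := fun _ => 0) (hJc.mono hab).neg le_rfl continuousOn_const
      (fun x _ => hasDerivWithinAt_const _ _ _) (fun x hx r hr => ?_) hs
    · linarith
    · have hx' : x ∈ Ioo 0 t := ⟨ha.1.trans_le hx.1, hx.2.trans hbt⟩
      have hnn : 0 ≤ J x ^ 2 / P x := div_nonneg (sq_nonneg _) (hP x ⟨hx'.1.le, hx'.2⟩).le
      refine Eventually.frequently ?_
      filter_upwards [hJ x hx' (-r) (by linarith)] with τ hτ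
      rw [slope_def_field] at hτ ⊢
      have : (-J τ - -J x) / (τ - x) = -((J τ - J x) / (τ - x)) := by ring
      rw [this]; linarith
  have hJlow : ∀ s ∈ Icc 0 b, 0 < J s := by
    intro s hs
    rcases hs.1.eq_or_lt with rfl | hs0
    · exact hJ0
    · refine hJ0.trans_le (le_of_tendsto (hlim0 J (hJc.mono hsub)) ?_)
      filter_upwards [Ioo_mem_nhdsGT hs0] with a ha
      exact hmono a ⟨ha.1, ha.2.trans_le hs.2⟩ s ⟨ha.2.le, hs.2⟩
  have hinvc : ContinuousOn (fun s => (P s)⁻¹) (Ico 0 t) := hPc.inv₀ fun s hs => (hP s hs).ne'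
  have hint : ∀ s ∈ Icc 0 b, IntervalIntegrable (fun s => (P s)⁻¹) volume 0 s := fun s hs =>
    (hinvc.mono (by rw [uIcc_of_le hs.1]; exact (Icc_subset_Icc_right hs.2).trans hsub)).intervalIntegrable
  set I : ℝ → ℝ := fun s => ∫ x in (0 : ℝ)..s, (P x)⁻¹ with hI
  have hIc : ContinuousOn I (Icc 0 b) := by
    have := intervalIntegral.continuousOn_primitive_interval' (hint b (right_mem_Icc.2 hb0.le))
      left_mem_uIcc
    rwa [uIcc_of_le hb0.le] at this
  have hinvJ : ContinuousOn (fun s => (J s)⁻¹) (Icc 0 b) :=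
    (hJc.mono hsub).inv₀ fun s hs => (hJlow s hs).ne'
  have hmain : ∀ a ∈ Ioo 0 b, (J b)⁻¹ ≤ (J a)⁻¹ + I a - I b := by
    intro a ha
    have hab : Icc a b ⊆ Icc 0 b := Icc_subset_Icc_left ha.1.le
    refine image_le_of_liminf_slope_right_le_deriv_boundary (f := fun s => (J s)⁻¹)
      (B := fun s => (J a)⁻¹ + I a - I s) (B' := fun s => -(P s)⁻¹) (hinvJ.mono hab)
      (by simp) (continuousOn_const.sub (hIc.mono hab)) (fun x hx => ?_) (fun x hx r hr => ?_)
      (right_mem_Icc.2 ha.2.le)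
    · have hx' : x ∈ Ioo 0 t := ⟨ha.1.trans_le hx.1, hx.2.trans hbt⟩
      have hd : HasDerivAt I (P x)⁻¹ x := intervalIntegral.integral_hasDerivAt_right
        (hint x ⟨hx'.1.le, hx.2.le⟩)
        ((hinvc.mono Ioo_subset_Ico_self).stronglyMeasurableAtFilter isOpen_Ioo x hx')
        ((hinvc.mono Ioo_subset_Ico_self).continuousAt (isOpen_Ioo.mem_nhds hx'))
      exact (hd.const_sub _).hasDerivWithinAt
    · have hx' : x ∈ Ioo 0 t := ⟨ha.1.trans_le hx.1, hx.2.trans hbt⟩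
      have hJx : 0 < J x := hJlow x ⟨hx'.1.le, hx.2.le⟩
      have hPx : 0 < P x := hP x ⟨hx'.1.le, hx'.2⟩
      obtain ⟨r', hr'1, hr'2⟩ : ∃ r', -r * J x ^ 2 < r' ∧ r' < J x ^ 2 / P x := by
        refine exists_between ?_
        rw [div_eq_mul_inv, mul_comm (-r)]
        exact mul_lt_mul_of_pos_left (by linarith) (by positivity)
      have hJcx : ContinuousAt J x :=
        (hJc.mono Ioo_subset_Ico_self).continuousAt (isOpen_Ioo.mem_nhds hx')
      have hlim : Tendsto (fun τ => -r' / (J τ * J x)) (𝓝[>] x) (𝓝 (-r' / (J x * J x))) :=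
        (tendsto_const_nhds.div (hJcx.tendsto.mul_const _) (by positivity)).mono_left
          nhdsWithin_le_nhds
      have hlt : -r' / (J x * J x) < r := by
        rw [div_lt_iff₀ (by positivity)]; nlinarith
      refine Eventually.frequently ?_
      filter_upwards [hJ x hx' r' hr'2, hlim.eventually (gt_mem_nhds hlt),
        Ioo_mem_nhdsGT hx.2] with τ h1 h2 h3
      have hJτ : 0 < J τ := hJlow τ ⟨hx'.1.le.trans h3.1.le, h3.2.le⟩
      refine lt_of_le_of_lt ?_ h2
      rw [slope_def_field] at h1 ⊢
      have hτx : 0 < τ - x := sub_pos.2 h3.1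
      have : ((J τ)⁻¹ - (J x)⁻¹) / (τ - x) = -((J τ - J x) / (τ - x)) / (J τ * J x) := by
        field_simp; ring
      rw [this]
      gcongr
  have hI0 : I 0 = 0 := by simp [hI]
  have : I b ≤ (J 0)⁻¹ + I 0 := by
    refine ge_of_tendsto (hlim0 (fun a => (J a)⁻¹ + I a) (hinvJ.add hIc)) ?_
    filter_upwards [Ioo_mem_nhdsGT hb0] with a ha
    have := hmain a ha
    have := inv_pos.2 (hJlow b (right_mem_Icc.2 hb0.le))
    linarith
  rwa [hI0, add_zero] at this

/-- A Fatou-type lemma for weighted integrals of functions bounded below. -/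
theorem eventually_lt_integral_mul {ι : Type*} {l : Filter ι} [l.IsCountablyGenerated]
    {q : ι → ℝ → ℝ} {F ρ : ℝ → ℝ} {B C r : ℝ} (hF : Continuous F) (hB : ∀ x, |F x| ≤ B)
    (hρ : Integrable ρ) (hρ0 : ∀ x, 0 ≤ ρ x) (hqc : ∀ᶠ i in l, Continuous (q i))
    (hqi : ∀ᶠ i in l, Integrable fun x => q i x * ρ x) (hqC : ∀ᶠ i in l, ∀ x, -C ≤ q i x)
    (hlim : ∀ x, ∃ y, F x ≤ y ∧ Tendsto (fun i => q i x) l (𝓝 y))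
    (hr : r < ∫ x, F x * ρ x) : ∀ᶠ i in l, r < ∫ x, q i x * ρ x := by
  have hbd : ∀ i, (∀ x, -C ≤ q i x) → ∀ x, |min (q i x) (F x)| ≤ max C B := fun i hi x => by
    refine abs_le.2 ⟨le_min ?_ ?_, ?_⟩
    · linarith [hi x, le_max_left C B]
    · linarith [(abs_le.1 (hB x)).1, le_max_right C B]
    · exact (min_le_right _ _).trans ((le_abs_self _).trans ((hB x).trans (le_max_right _ _)))
  have h1 : Tendsto (fun i => ∫ x, min (q i x) (F x) * ρ x) l (𝓝 (∫ x, F x * ρ x)) := by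
    refine tendsto_integral_filter_of_dominated_convergence (fun x => max C B * ρ x) ?_ ?_
      (hρ.const_mul _) (.of_forall fun x => ?_)
    · filter_upwards [hqc] with i hi
      exact (hi.min hF).aestronglyMeasurable.mul hρ.1
    · filter_upwards [hqC] with i hi
      refine .of_forall fun x => ?_
      rw [Real.norm_eq_abs, abs_mul, abs_of_nonneg (hρ0 x)]
      exact mul_le_mul_of_nonneg_right (hbd i hi x) (hρ0 x)
    · obtain ⟨y, hy, hlimy⟩ := hlim x
      have := (hlimy.min (tendsto_const_nhds (x := F x))).mul_const (ρ x)
      rwa [min_eq_right hy] at this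
  filter_upwards [h1.eventually (lt_mem_nhds hr), hqc, hqi, hqC] with i hi hic hii hiC
  refine hi.trans_le (integral_mono ?_ hii fun x =>
    mul_le_mul_of_nonneg_right (min_le_left _ _) (hρ0 x))
  exact hρ.bdd_mul (hic.min hF).aestronglyMeasurable (.of_forall (hbd i hiC))

theorem integral_heatFlow_mul {ζ ρ : ℝ → ℝ} {N τ : ℝ} (hζ : Continuous ζ) (hN : ∀ x, |ζ x| ≤ N)
    (hρ : Integrable ρ) :
    ∫ x, heatFlow ζ τ x * ρ x = heatFlow (fun y => ∫ x, ζ (x + y) * ρ x) τ 0 := by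
  unfold heatFlow
  simp_rw [← integral_mul_const, zero_add]
  refine integral_integral_swap ?_
  have h1 : Integrable (fun p : ℝ × ℝ => ρ p.1) (volume.prod (gaussianReal 0 1)) :=
    hρ.comp_fst _
  refine h1.bdd_mul (f := fun p : ℝ × ℝ => ζ (p.1 + √(2 * τ) * p.2)) (c := N) ?_
    (.of_forall fun p => hN _)
  exact (hζ.comp (by fun_prop)).aestronglyMeasurable

theorem tendsto_integral_heatFlow_sub_div {ζ ρ ρ₁ ρ₂ : ℝ → ℝ} {N : ℝ} (hζ : Continuous ζ)
    (hN : ∀ x, |ζ x| ≤ N) (hρ : Integrable ρ) (hρ₁ : Integrable ρ₁) (hρ₂ : Integrable ρ₂)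
    (hc₂ : Continuous ρ₂) (hd₁ : ∀ x, HasDerivAt ρ (ρ₁ x) x)
    (hd₂ : ∀ x, HasDerivAt ρ₁ (ρ₂ x) x) :
    Tendsto (fun τ => ((∫ x, heatFlow ζ τ x * ρ x) - ∫ x, ζ x * ρ x) / τ) (𝓝[>] 0)
      (𝓝 (∫ x, ζ x * ρ₂ x)) := by
  have hc₁ : Continuous ρ₁ := continuous_iff_continuousAt.2 fun x => (hd₂ x).continuousAt
  have h1 := hasDerivAt_integral_translate_mul hζ hN hρ hρ₁ hc₁ hd₁
  have h2 := hasDerivAt_integral_translate_mul hζ hN hρ₁ hρ₂ hc₂ hd₂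
  have hsec : HasSecondDerivAt (fun y => ∫ x, ζ (x + y) * ρ x) (∫ x, ζ x * ρ₂ x) 0 := by
    refine ⟨_, h1, ?_⟩
    exact (h2 0).neg.congr_deriv (by simp)
  have hbd : ∀ y, |∫ x, ζ (x + y) * ρ x| ≤ N * ∫ x, |ρ x| := fun y => by
    rw [← integral_const_mul]
    refine (Real.norm_eq_abs _).symm.trans_le
      (norm_integral_le_of_norm_le (hρ.abs.const_mul N) (.of_forall fun x => ?_))
    rw [Real.norm_eq_abs, abs_mul]
    exact mul_le_mul_of_nonneg_right (hN _) (abs_nonneg _)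
  have := hsec.tendsto_heatFlow hbd
  simp only [add_zero] at this
  exact this.congr fun τ => by rw [integral_heatFlow_mul hζ hN hρ]

/-- Lower bound for the right derivative of `∫ z ρ` when `∂ₜz ≥ ∂ₓ²z + F` and `ρ` solves the
adjoint equation `∂ₜρ = -∂ₓ²ρ + V`. -/
theorem IsBoundedSupersolution.eventually_lt_slope_integral {z : ℝ → ℝ → ℝ} {T N C B s : ℝ}
    (h : IsBoundedSupersolution z T N C) (hz0 : ∀ s ∈ Ioo 0 T, ∀ x, 0 ≤ z s x)
    (hs : s ∈ Ioo 0 T) {F : ℝ → ℝ} (hF : Continuous F) (hB : ∀ x, |F x| ≤ B)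
    (hz : ∀ x, ∃ D c, HasDerivAt (fun τ => z τ x) D s ∧ HasSecondDerivAt (z s) c x ∧ c + F x ≤ D)
    {ρ : ℝ → ℝ → ℝ} {ρ₁ ρ₂ V g : ℝ → ℝ} (hρ0 : ∀ x, 0 ≤ ρ s x) (hρ : Integrable (ρ s))
    (hρ₁ : Integrable ρ₁) (hρ₂ : Integrable ρ₂) (hc₂ : Continuous ρ₂)
    (hd₁ : ∀ x, HasDerivAt (ρ s) (ρ₁ x) x) (hd₂ : ∀ x, HasDerivAt ρ₁ (ρ₂ x) x)
    (hV : Integrable V) (hdt : ∀ x, HasDerivAt (fun τ => ρ τ x) (-ρ₂ x + V x) s)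
    (hg : Integrable g) (hρi : ∀ᶠ τ in 𝓝[>] s, Integrable (ρ τ))
    (hlip : ∀ᶠ τ in 𝓝[>] s, ∀ x, |ρ τ x - ρ s x| ≤ g x * (τ - s))
    {r : ℝ} (hr : r < ∫ x, (z s x * V x + F x * ρ s x)) :
    ∀ᶠ τ in 𝓝[>] s, r < slope (fun σ => ∫ x, z σ x * ρ σ x) s τ := by
  have hzc := h.continuous_space hs
  have hzN := h.norm_le s hs
  have hmul : ∀ σ ∈ Ioo 0 T, ∀ k : ℝ → ℝ, Integrable k → Integrable fun x => z σ x * k x :=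
    fun σ hσ k hk => hk.bdd_mul (h.continuous_space hσ).aestronglyMeasurable
      (.of_forall (h.norm_le σ hσ))
  have hFρ : Integrable fun x => F x * ρ s x :=
    hρ.bdd_mul hF.aestronglyMeasurable (.of_forall hB)
  have hT : ∀ᶠ τ in 𝓝[>] s, τ ∈ Ioo s T := Ioo_mem_nhdsGT hs.2
  have hT0 : ∀ τ ∈ Ioo s T, τ ∈ Ioo 0 T := fun τ hτ => ⟨hs.1.trans hτ.1, hτ.2⟩
  have hshift : Tendsto (fun τ => τ - s) (𝓝[>] s) (𝓝[>] 0) := by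
    refine tendsto_nhdsWithin_iff.2 ⟨?_, ?_⟩
    · have : Continuous fun τ : ℝ => τ - s := by fun_prop
      simpa using (this.tendsto s).mono_left nhdsWithin_le_nhds
    · filter_upwards [self_mem_nhdsWithin] with τ hτ
      exact sub_pos.2 (show s < τ from hτ)
  have hright : 𝓝[>] s ≤ 𝓝[≠] s := nhdsWithin_mono s fun τ (hτ : s < τ) => hτ.ne'
  have hA : Tendsto (fun τ => ∫ x, z τ x * ((ρ τ x - ρ s x) / (τ - s))) (𝓝[>] s)
      (𝓝 (∫ x, z s x * (-ρ₂ x + V x))) := by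
    refine tendsto_integral_filter_of_dominated_convergence (fun x => N * g x) ?_ ?_
      (hg.const_mul _) (.of_forall fun x => ?_)
    · filter_upwards [hT, hρi] with τ hτ hτi
      exact (h.continuous_space (hT0 τ hτ)).aestronglyMeasurable.mul
        ((hτi.sub hρ).div_const _).1
    · filter_upwards [hT, hlip] with τ hτ hτl
      refine .of_forall fun x => ?_
      have hpos : 0 < τ - s := sub_pos.2 hτ.1
      have hN0 : 0 ≤ N := (abs_nonneg _).trans (hzN 0)
      rw [Real.norm_eq_abs, abs_mul, abs_div, abs_of_pos hpos]
      refine mul_le_mul (h.norm_le τ (hT0 τ hτ) x) ?_ (by positivity) hN0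
      rw [div_le_iff₀ hpos]
      exact hτl x
    · refine ((h.continuousAt_time hs x).tendsto.mono_left nhdsWithin_le_nhds).mul ?_
      have := (hasDerivAt_iff_tendsto_slope.1 (hdt x)).mono_left hright
      refine this.congr fun τ => ?_
      rw [slope_def_field]
  have hCc := (tendsto_integral_heatFlow_sub_div hzc hzN hρ hρ₁ hρ₂ hc₂ hd₁ hd₂).comp hshift
  have hsum : (∫ x, (z s x * V x + F x * ρ s x)) =
      (∫ x, z s x * (-ρ₂ x + V x)) + (∫ x, z s x * ρ₂ x) + ∫ x, F x * ρ s x := by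
    rw [integral_add (hmul s hs V hV) hFρ, ← integral_add
      (hmul s hs (fun x => -ρ₂ x + V x) (hρ₂.neg.add hV)) (hmul s hs ρ₂ hρ₂)]
    congr 2
    ext x
    ring
  have hKc : ∀ τ, Continuous fun x => heatFlow (z s) τ x := fun τ =>
    (continuous_heatFlow hzc hzN).comp (by fun_prop : Continuous fun x => (τ, x))
  have hKN : ∀ τ x, |heatFlow (z s) τ x| ≤ N := fun τ x => by
    rw [abs_of_nonneg (heatFlow_nonneg (hz0 s hs))]
    exact _root_.heatFlow_le hzc hzN
  have hKi : ∀ τ, Integrable fun x => heatFlow (z s) τ x * ρ s x := fun τ =>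
    hρ.bdd_mul (hKc τ).aestronglyMeasurable (.of_forall (hKN τ))
  have hBq : ∀ r' < ∫ x, F x * ρ s x, ∀ᶠ τ in 𝓝[>] s,
      r' < ∫ x, (z τ x - heatFlow (z s) (τ - s) x) / (τ - s) * ρ s x := by
    intro r' hr'
    refine eventually_lt_integral_mul (C := C) hF hB hρ hρ0 ?_ ?_ ?_ (fun x => ?_) hr'
    · filter_upwards [hT] with τ hτ
      exact ((h.continuous_space (hT0 τ hτ)).sub (hKc _)).div_const _
    · filter_upwards [hT] with τ hτ
      refine (((hmul τ (hT0 τ hτ) _ hρ).sub (hKi (τ - s))).div_const (τ - s)).congr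
        (.of_forall fun x => ?_)
      simp only [Pi.sub_apply]
      ring
    · filter_upwards [hT] with τ hτ x
      rw [le_div_iff₀ (sub_pos.2 hτ.1)]
      linarith [h.heatFlow_le hz0 hs.1 hτ.1.le hτ.2 x]
    · obtain ⟨D, c, hD, hc, hcD⟩ := hz x
      refine ⟨D - c, by linarith, ?_⟩
      have h1 := (hasDerivAt_iff_tendsto_slope.1 hD).mono_left hright
      have h2 := (hc.tendsto_heatFlow hzN).comp hshift
      refine (h1.sub h2).congr fun τ => ?_
      rw [slope_def_field, Function.comp_apply, ← sub_div]
      congr 1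
      ring
  rw [hsum] at hr
  set a := ∫ x, z s x * (-ρ₂ x + V x)
  set c := ∫ x, z s x * ρ₂ x
  set b := ∫ x, F x * ρ s x
  obtain ⟨η, hη, hrη⟩ : ∃ η > 0, r + 3 * η < a + c + b :=
    ⟨(a + c + b - r) / 4, by linarith, by linarith⟩
  filter_upwards [hA.eventually (lt_mem_nhds (show a - η < a by linarith)),
    hCc.eventually (lt_mem_nhds (show c - η < c by linarith)), hBq (b - η) (by linarith), hT, hρi]
    with τ h1 h2 h3 hτ hτi
  have hpos : 0 < τ - s := sub_pos.2 hτ.1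
  have hτ0 := hT0 τ hτ
  have hdecomp : slope (fun σ => ∫ x, z σ x * ρ σ x) s τ =
      (∫ x, z τ x * ((ρ τ x - ρ s x) / (τ - s))) +
      (∫ x, (z τ x - heatFlow (z s) (τ - s) x) / (τ - s) * ρ s x) +
      ((∫ x, heatFlow (z s) (τ - s) x * ρ s x) - ∫ x, z s x * ρ s x) / (τ - s) := by
    have e1 : ∫ x, z τ x * ((ρ τ x - ρ s x) / (τ - s)) =
        ((∫ x, z τ x * ρ τ x) - ∫ x, z τ x * ρ s x) / (τ - s) := by
      rw [← integral_sub (hmul τ hτ0 _ hτi) (hmul τ hτ0 _ hρ), ← integral_div]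
      congr 1; ext x; ring
    have e2 : ∫ x, (z τ x - heatFlow (z s) (τ - s) x) / (τ - s) * ρ s x =
        ((∫ x, z τ x * ρ s x) - ∫ x, heatFlow (z s) (τ - s) x * ρ s x) / (τ - s) := by
      rw [← integral_sub (hmul τ hτ0 _ hρ) (hKi _), ← integral_div]
      congr 1; ext x; ring
    rw [e1, e2, slope_def_field]
    ring
  rw [hdecomp]
  simp only [Function.comp_apply] at h2
  linarith

/-- The bounded concave increasing function `v ↦ v / (1 + δ v)` on `[0, ∞)`. -/
noncomputable def saturate (δ v : ℝ) : ℝ := v / (1 + δ * v)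

theorem saturate_nonneg {δ v : ℝ} (hδ : 0 < δ) (hv : 0 ≤ v) : 0 ≤ saturate δ v := by
  unfold saturate; positivity

theorem abs_saturate_le {δ v : ℝ} (hδ : 0 < δ) (hv : 0 ≤ v) : |saturate δ v| ≤ 1 / δ := by
  rw [abs_of_nonneg (saturate_nonneg hδ hv), saturate, div_le_div_iff₀ (by positivity) hδ]
  linarith

theorem hasDerivAt_saturate {δ v : ℝ} (hδ : 0 < δ) (hv : 0 ≤ v) :
    HasDerivAt (saturate δ) (1 / (1 + δ * v) ^ 2) v := by
  have h0 : 1 + δ * v ≠ 0 := by positivity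
  have h1 : HasDerivAt (fun v => 1 + δ * v) (δ * 1) v := ((hasDerivAt_id v).const_mul δ).const_add 1
  exact ((hasDerivAt_id v).div h1 h0).congr_deriv (by simp only [id]; field_simp; ring)

/-- If `v ≥ 0` satisfies `∂ₜv = ∂ₓ²v - 2 f v + v²`, its saturation `z` satisfies
`∂ₜz ≥ ∂ₓ²z - 2 f z + z²`. -/
theorem saturate_supersolution {v : ℝ → ℝ → ℝ} {δ s a : ℝ} (hδ : 0 < δ) (ha : 0 ≤ a)
    (hv : ∀ x, 0 ≤ v s x) (hreg : ContDiff ℝ 2 (v s)) (x : ℝ)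
    (hdt : HasDerivAt (fun τ => v τ x) (deriv (deriv (v s)) x - 2 * a * v s x + v s x ^ 2) s) :
    ∃ D c, HasDerivAt (fun τ => saturate δ (v τ x)) D s ∧
      HasSecondDerivAt (fun y => saturate δ (v s y)) c x ∧
      c + (saturate δ (v s x) ^ 2 - 2 * a * saturate δ (v s x)) ≤ D := by
  have hd : ∀ y, HasDerivAt (v s) (deriv (v s) y) y := fun y =>
    (hreg.differentiable (by norm_num) y).hasDerivAt
  have hd' : HasDerivAt (deriv (v s)) (deriv (deriv (v s)) x) x :=
    ((hreg.iterate_deriv' 1 1).differentiable (by norm_num) x).hasDerivAt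
  have hq : HasDerivAt (fun y => (1 + δ * v s y) ^ 2)
      (2 * (1 + δ * v s x) * (δ * deriv (v s) x)) x :=
    ((((hd x).const_mul δ).const_add 1).pow 2).congr_deriv (by ring)
  have hp : 0 < 1 + δ * v s x := by have := hv x; positivity
  have ht := HasDerivAt.comp s (h₂ := saturate δ) (hasDerivAt_saturate hδ (hv x)) hdt
  refine ⟨_, _, ht,
    ⟨fun y => 1 / (1 + δ * v s y) ^ 2 * deriv (v s) y, fun y =>
      HasDerivAt.comp y (h₂ := saturate δ) (hasDerivAt_saturate hδ (hv y)) (hd y),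
      (((hasDerivAt_const x (1 : ℝ)).div hq (by positivity)).mul hd')⟩, ?_⟩
  have hvx := hv x
  simp only [saturate, Pi.div_apply]
  generalize v s x = V at *
  generalize deriv (deriv (v s)) x = V₂
  generalize deriv (v s) x = V₁
  rw [← sub_nonneg]
  have : 1 / (1 + δ * V) ^ 2 * (V₂ - 2 * a * V + V ^ 2) -
      ((0 * (1 + δ * V) ^ 2 - 1 * (2 * (1 + δ * V) * (δ * V₁))) / ((1 + δ * V) ^ 2) ^ 2 * V₁ +
        1 / (1 + δ * V) ^ 2 * V₂ + ((V / (1 + δ * V)) ^ 2 - 2 * a * (V / (1 + δ * V)))) =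
      2 * δ * V₁ ^ 2 / (1 + δ * V) ^ 3 + 2 * a * δ * V ^ 2 / (1 + δ * V) ^ 2 := by
    field_simp
    ring
  rw [this]
  positivity

theorem sq_integral_mul_div_le {z ρ : ℝ → ℝ} (hρ0 : ∀ x, 0 ≤ ρ x) (hρ : Integrable ρ)
    (hz : Integrable fun x => z x * ρ x) (hz2 : Integrable fun x => z x ^ 2 * ρ x)
    (hpos : 0 < ∫ x, ρ x) : (∫ x, z x * ρ x) ^ 2 / (∫ x, ρ x) ≤ ∫ x, z x ^ 2 * ρ x := by
  set P := ∫ x, ρ x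
  set J := ∫ x, z x * ρ x
  have h0 : 0 ≤ ∫ x, (z x - J / P) ^ 2 * ρ x :=
    integral_nonneg fun x => mul_nonneg (sq_nonneg _) (hρ0 x)
  have h1 : ∫ x, (z x - J / P) ^ 2 * ρ x =
      (∫ x, z x ^ 2 * ρ x) - 2 * (J / P) * J + (J / P) ^ 2 * P := by
    rw [← integral_const_mul, ← integral_const_mul, ← integral_sub hz2 (hz.const_mul _),
      ← integral_add (f := fun x => z x ^ 2 * ρ x - 2 * (J / P) * (z x * ρ x))
        (hz2.sub (hz.const_mul _)) (hρ.const_mul _)]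
    congr 1; ext x; ring
  have h2 : 2 * (J / P) * J - (J / P) ^ 2 * P = J ^ 2 / P := by field_simp; ring
  linarith

theorem Continuous.exists_forall_abs_le_of_tendsto_cocompact {f : ℝ → ℝ} (hf : Continuous f) {a : ℝ}
    (h : Tendsto f (cocompact ℝ) (𝓝 a)) : ∃ M, ∀ x, |f x| ≤ M := by
  have h1 := h.eventually (Metric.ball_mem_nhds a one_pos)
  obtain ⟨K, hK, hKs⟩ := mem_cocompact.1 h1
  obtain ⟨M, hM⟩ := hK.exists_bound_of_continuousOn hf.continuousOn
  refine ⟨max M (|a| + 1), fun x => ?_⟩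
  by_cases hx : x ∈ K
  · exact (hM x hx).trans (le_max_left _ _)
  · have h2 : |f x - a| < 1 := hKs hx
    have h3 := abs_add_le (f x - a) a
    rw [sub_add_cancel] at h3
    exact le_trans (by linarith) (le_max_right _ _)

theorem intervalIntegral_le_of_forall_lt {k : ℝ → ℝ} {t M : ℝ} (ht : 0 < t) (hM : 0 ≤ M)
    (h : ∀ b, 0 < b → b < t → ∫ s in (0 : ℝ)..b, k s ≤ M) : ∫ s in (0 : ℝ)..t, k s ≤ M := by
  by_cases hk : IntervalIntegrable k volume 0 t
  · have hc := (intervalIntegral.continuousOn_primitive_interval' hk left_mem_uIcc) t right_mem_uIcc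
    have : Tendsto (fun b => ∫ s in (0 : ℝ)..b, k s) (𝓝[Ioo 0 t] t)
        (𝓝 (∫ s in (0 : ℝ)..t, k s)) :=
      hc.mono (Ioo_subset_Icc_self.trans Icc_subset_uIcc)
    have : NeBot (𝓝[Ioo 0 t] t) := by
      rw [nhdsWithin_Ioo_eq_nhdsLT ht]; infer_instance
    refine le_of_tendsto ‹Tendsto _ _ _› ?_
    filter_upwards [self_mem_nhdsWithin] with b hb
    exact h b hb.1 hb.2
  · rwa [intervalIntegral.integral_undef hk]

/-- Truncated form of the fence inequality: `v = -u` enters only through its saturation. -/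
theorem integral_inv_integral_le_of_saturate {f : ℝ → ℝ} {M ε δ t T : ℝ} {v w : ℝ → ℝ → ℝ}
    {g : ℝ → ℝ} (hf : Continuous f) (hf0 : ∀ x, 0 ≤ f x) (hM : ∀ x, |f x| ≤ M)
    (hε : 0 < ε) (hδ : 0 < δ) (ht : t ∈ Ioo 0 T) (hv0 : ∀ x, v 0 x = ε)
    (hv : ∀ s ∈ Ico 0 T, ∀ x, 0 ≤ v s x) (hv_reg : ∀ s ∈ Ico 0 T, ContDiff ℝ 2 (v s))
    (hv_eq : ∀ s ∈ Ico 0 T, ∀ x, HasDerivAt (fun τ => v τ x)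
      (deriv (deriv (v s)) x - 2 * f x * v s x + v s x ^ 2) s)
    (hw_eq : ∀ s, 0 < s → ∀ x, HasDerivAt (fun τ => w τ x)
      (deriv (deriv (w s)) x - 2 * f x * w s x) s)
    (hw_reg : ∀ s, 0 < s → ContDiff ℝ 2 (w s)) (hw : ∀ s, 0 < s → ∀ x, 0 ≤ w s x)
    (hw_int : ∀ s, 0 < s → Integrable (w s)) (hw_int' : ∀ s, 0 < s → Integrable (deriv (w s)))
    (hw_pos : ∀ s, 0 < s → 0 < ∫ x, w s x) (hg : Integrable g)
    (hwg : ∀ s ∈ Icc 0 t, ∀ x, |w s x| ≤ g x)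
    (hwg' : ∀ s ∈ Icc 0 t, ∀ x, |deriv (fun τ => w τ x) s| ≤ g x) :
    ∫ s in (0 : ℝ)..t, (∫ x, w (t - s) x)⁻¹ ≤ (saturate δ ε * ∫ x, w t x)⁻¹ := by
  have hsat : 0 < saturate δ ε := by unfold saturate; positivity
  have hM0 : 0 ≤ M := (abs_nonneg _).trans (hM 0)
  have hIco : ∀ {s}, s ∈ Ico 0 t → s ∈ Ico 0 T := fun hs => ⟨hs.1, hs.2.trans ht.2⟩
  have hIoo : ∀ {s}, s ∈ Ioo 0 T → s ∈ Ico 0 T := fun hs => ⟨hs.1.le, hs.2⟩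
  have hsub : ∀ {s}, s ∈ Ico 0 t → 0 < t - s := fun hs => sub_pos.2 hs.2
  have hsubI : ∀ {s}, s ∈ Ico 0 t → t - s ∈ Icc 0 t := fun hs =>
    ⟨(hsub hs).le, by linarith [hs.1]⟩
  have hzc : ∀ s ∈ Ico 0 T, Continuous fun x => saturate δ (v s x) := fun s hs =>
    continuous_iff_continuousAt.2 fun x => ContinuousAt.comp (g := saturate δ)
      (hasDerivAt_saturate hδ (hv s hs x)).continuousAt (hv_reg s hs).continuous.continuousAt
  have hzN : ∀ s ∈ Ico 0 T, ∀ x, |saturate δ (v s x)| ≤ 1 / δ := fun s hs x =>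
    abs_saturate_le hδ (hv s hs x)
  have hz0 : ∀ s ∈ Ioo 0 T, ∀ x, 0 ≤ saturate δ (v s x) := fun s hs x =>
    saturate_nonneg hδ (hv s (hIoo hs) x)
  have hineq : ∀ s ∈ Ioo 0 T, ∀ x, _ := fun s hs x =>
    saturate_supersolution hδ (hf0 x) (hv s (hIoo hs)) (hv_reg s (hIoo hs)) x (hv_eq s (hIoo hs) x)
  have hsup : IsBoundedSupersolution (fun s x => saturate δ (v s x)) T (1 / δ)
      (2 * M * (1 / δ) + 1) := by
    refine ⟨by positivity, fun s hs => hzN s (hIoo hs), fun s hs x => ?_⟩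
    obtain ⟨D, c, hD, hc, hcD⟩ := hineq s hs x
    refine ⟨D, c, hD, hc, ?_⟩
    have h1 : f x * saturate δ (v s x) ≤ M * (1 / δ) :=
      mul_le_mul ((le_abs_self _).trans (hM x)) ((le_abs_self _).trans (hzN s (hIoo hs) x))
        (hz0 s hs x) hM0
    nlinarith [sq_nonneg (saturate δ (v s x))]
  have hwdiff : ∀ x, ContinuousOn (fun s => w (t - s) x) (Ico 0 t) := fun x s hs =>
    (ContinuousAt.comp (f := fun s => t - s) (g := fun τ => w τ x)
      (hw_eq _ (hsub hs) x).continuousAt (by fun_prop)).continuousWithinAt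
  have hPc : ContinuousOn (fun s => ∫ x, w (t - s) x) (Ico 0 t) :=
    continuousOn_of_dominated (fun s hs => (hw_int _ (hsub hs)).1)
      (fun s hs => .of_forall fun x => hwg _ (hsubI hs) x) hg (.of_forall hwdiff)
  have hJc : ContinuousOn (fun s => ∫ x, saturate δ (v s x) * w (t - s) x) (Ico 0 t) := by
    refine continuousOn_of_dominated (bound := fun x => 1 / δ * g x) (fun s hs => ?_)
      (fun s hs => .of_forall fun x => ?_) (hg.const_mul _) (.of_forall fun x => ?_)
    · exact (hzc s (hIco hs)).aestronglyMeasurable.mul (hw_int _ (hsub hs)).1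
    · rw [Real.norm_eq_abs, abs_mul]
      exact mul_le_mul (hzN s (hIco hs) x) (hwg _ (hsubI hs) x) (abs_nonneg _) (by positivity)
    · refine ContinuousOn.mul (fun s hs => ?_) (hwdiff x)
      exact (ContinuousAt.comp (f := fun s => v s x) (g := saturate δ)
        (hasDerivAt_saturate hδ (hv s (hIco hs) x)).continuousAt
        (hv_eq s (hIco hs) x).continuousAt).continuousWithinAt
  have hJ0 : (∫ x, saturate δ (v 0 x) * w (t - 0) x) = saturate δ ε * ∫ x, w t x := by
    simp only [hv0, sub_zero, integral_const_mul]
  have hslope : ∀ s ∈ Ioo 0 t, ∀ r < (∫ x, saturate δ (v s x) * w (t - s) x) ^ 2 /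
      (∫ x, w (t - s) x), ∀ᶠ τ in 𝓝[>] s,
      r < slope (fun s => ∫ x, saturate δ (v s x) * w (t - s) x) s τ := by
    intro s hs r hr
    have hst : s ∈ Ico 0 t := ⟨hs.1.le, hs.2⟩
    have hsT : s ∈ Ioo 0 T := ⟨hs.1, hs.2.trans ht.2⟩
    have hp := hsub hst
    have hreg := hw_reg _ hp
    have hreg' : ContDiff ℝ 1 (deriv (w (t - s))) := hreg.iterate_deriv' 1 1
    have hreg₂ : Continuous (deriv (deriv (w (t - s)))) := hreg'.continuous_deriv le_rfl
    have hfw : Integrable fun x => f x * w (t - s) x :=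
      (hw_int _ hp).bdd_mul hf.aestronglyMeasurable (.of_forall hM)
    have hV : Integrable fun x => 2 * f x * w (t - s) x := by
      simpa only [mul_assoc] using hfw.const_mul 2
    have hρ₂ : Integrable (deriv (deriv (w (t - s)))) := by
      refine (hg.add hV.abs).mono' hreg₂.aestronglyMeasurable (.of_forall fun x => ?_)
      have h1 := hwg' _ (hsubI hst) x
      rw [(hw_eq _ hp x).deriv] at h1
      have h2 := abs_add_le (deriv (deriv (w (t - s))) x - 2 * f x * w (t - s) x)
        (2 * f x * w (t - s) x)
      rw [sub_add_cancel] at h2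
      rw [Real.norm_eq_abs]
      exact h2.trans (add_le_add_left h1 _)
    have hF : Continuous fun x => saturate δ (v s x) ^ 2 - 2 * f x * saturate δ (v s x) := by
      have := hzc s (hIco hst)
      fun_prop
    have hB : ∀ x, |saturate δ (v s x) ^ 2 - 2 * f x * saturate δ (v s x)| ≤
        (1 / δ) ^ 2 + 2 * M * (1 / δ) := fun x => by
      refine (abs_sub _ _).trans (add_le_add ?_ ?_)
      · rw [abs_pow]
        exact pow_le_pow_left₀ (abs_nonneg _) (hzN s (hIco hst) x) 2
      · rw [abs_mul, abs_mul, abs_two]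
        have := hM x
        have := hzN s (hIco hst) x
        gcongr
    have hmul : Integrable fun x => saturate δ (v s x) * w (t - s) x :=
      (hw_int _ hp).bdd_mul (hzc s (hIco hst)).aestronglyMeasurable (.of_forall (hzN s (hIco hst)))
    have hsq : Integrable fun x => saturate δ (v s x) ^ 2 * w (t - s) x := by
      refine (hmul.bdd_mul (hzc s (hIco hst)).aestronglyMeasurable
        (.of_forall (hzN s (hIco hst)))).congr (.of_forall fun x => ?_)
      simp only
      ring
    refine hsup.eventually_lt_slope_integral hz0 hsT hF hB (hineq s hsT)
      (ρ := fun s x => w (t - s) x) (V := fun x => 2 * f x * w (t - s) x) (hw _ hp)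
      (hw_int _ hp) (hw_int' _ hp) hρ₂ hreg₂
      (fun x => (hreg.differentiable (by norm_num) x).hasDerivAt)
      (fun x => (hreg'.differentiable (by norm_num) x).hasDerivAt) hV (fun x => ?_) hg ?_ ?_ ?_
    · have := HasDerivAt.comp s (h₂ := fun τ => w τ x) (hw_eq _ hp x)
        ((hasDerivAt_id s).const_sub t)
      exact this.congr_deriv (by ring)
    · filter_upwards [Ioo_mem_nhdsGT hs.2] with τ hτ
      exact hw_int _ (sub_pos.2 hτ.2)
    · filter_upwards [Ioo_mem_nhdsGT hs.2] with τ hτ x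
      have hd : ∀ σ ∈ Icc (t - τ) (t - s), 0 < σ := fun σ hσ => (sub_pos.2 hτ.2).trans_le hσ.1
      have := (convex_Icc (t - τ) (t - s)).norm_image_sub_le_of_norm_deriv_le
        (f := fun σ => w σ x) (C := g x) (fun σ hσ => (hw_eq σ (hd σ hσ) x).differentiableAt)
        (fun σ hσ => hwg' σ ⟨(hd σ hσ).le, hσ.2.trans (hsubI hst).2⟩ x)
        (right_mem_Icc.2 (by linarith [hτ.1])) (left_mem_Icc.2 (by linarith [hτ.1]))
      rw [Real.norm_eq_abs, Real.norm_eq_abs, abs_sub_comm (t - τ), sub_sub_sub_cancel_left,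
        abs_of_pos (sub_pos.2 hτ.1)] at this
      exact this
    · refine (hr.trans_le (sq_integral_mul_div_le (hw _ hp) (hw_int _ hp) hmul hsq
        (hw_pos _ hp))).trans_eq ?_
      congr 1; ext x; ring
  refine intervalIntegral_le_of_forall_lt ht.1
    (inv_nonneg.2 (mul_nonneg hsat.le (hw_pos t ht.1).le)) fun b hb0 hbt => ?_
  have := integral_inv_le_inv_of_riccati (fun s hs => hw_pos _ (hsub hs)) hPc hJc
    (by rw [hJ0]; exact mul_pos hsat (hw_pos t ht.1)) hslope hb0 hbt
  rwa [hJ0] at this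

end Auxiliary

/-- Remark (stability criterion): for a nonpositive bounded classical solution `u` of
`∂u/∂t = ∂²u/∂x² − 2 f u − u²` with constant initial datum `u(0,·) = −ε`, and a solution
`w` of the linearized equation with nonnegative nonzero integrable initial datum and the
regularity/decay from parabolic theory, for every `t ∈ (0,T)`:
`ε ∫₀ᵗ ‖w(t,·)‖_{L¹}/‖w(s,·)‖_{L¹} ds ≤ 1`.  Consequently, if
`ε ∫₀^{T'} ‖w(T',·)‖_{L¹}/‖w(s,·)‖_{L¹} ds > 1` for some `T' > 0`, then no such
classical solution can exist on `[0,T)` with `T > T'`. -/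
theorem fence_inequality_constant_datum
    (f : ℝ → ℝ) (hf_smooth : ContDiff ℝ (⊤ : ℕ∞) f) (hf_pos : ∀ x, 0 < f x)
    (hf_decay : Tendsto f (cocompact ℝ) (nhds 0))
    (hf_d1 : ∃ M : ℝ, ∀ x, |deriv f x| ≤ M)
    (hf_d2 : ∃ M : ℝ, ∀ x, |deriv (deriv f) x| ≤ M)
    (ε : ℝ) (hε : 0 < ε)
    (T : ℝ) (hT : 0 < T)
    (u : ℝ → ℝ → ℝ)
    (hu0 : ∀ x, u 0 x = -ε)
    (hu_eq : ∀ s ∈ Set.Ico (0 : ℝ) T, ∀ x : ℝ,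
      HasDerivAt (fun τ => u τ x)
        (deriv (deriv (u s)) x - 2 * f x * u s x - (u s x) ^ 2) s)
    (hu_reg : ∀ s ∈ Set.Ico (0 : ℝ) T, ContDiff ℝ 2 (u s))
    (hu_cont : ∀ x, ContinuousOn (fun s => u s x) (Set.Ico (0 : ℝ) T))
    (hu_nonpos : ∀ s ∈ Set.Ico (0 : ℝ) T, ∀ x, u s x ≤ 0)
    (hu_bdd : ∀ s ∈ Set.Ico (0 : ℝ) T, ∃ M : ℝ, ∀ x, |u s x| ≤ M)
    (w : ℝ → ℝ → ℝ) (w₀ : ℝ → ℝ)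
    (hw0 : ∀ x, w 0 x = w₀ x)
    (hw0_nonneg : ∀ x, 0 ≤ w₀ x) (hw0_int : Integrable w₀)
    (hw_eq : ∀ s : ℝ, 0 < s → ∀ x : ℝ,
      HasDerivAt (fun τ => w τ x)
        (deriv (deriv (w s)) x - 2 * f x * w s x) s)
    (hw_reg : ∀ s : ℝ, 0 ≤ s → ContDiff ℝ 2 (w s))
    (hw_nonneg : ∀ s : ℝ, 0 ≤ s → ∀ x, 0 ≤ w s x)
    (hw_int : ∀ s : ℝ, 0 ≤ s → Integrable (w s) ∧ Integrable (deriv (w s)))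
    (hw_decay : ∀ s : ℝ, 0 ≤ s →
      Tendsto (w s) (cocompact ℝ) (nhds 0) ∧
        Tendsto (deriv (w s)) (cocompact ℝ) (nhds 0))
    (hw_pos : ∀ s : ℝ, 0 ≤ s → 0 < ∫ x, |w s x|)
    (hw_unif : ∀ t₀ : ℝ, 0 ≤ t₀ → ∃ g : ℝ → ℝ, Integrable g ∧
      ∀ s ∈ Set.Icc (0 : ℝ) t₀, ∀ x,
        |w s x| ≤ g x ∧ |deriv (fun τ => w τ x) s| ≤ g x) :
    (∀ t ∈ Set.Ioo (0 : ℝ) T,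
      ε * ∫ s in (0 : ℝ)..t, (∫ x, |w t x|) / (∫ x, |w s x|) ≤ 1) ∧
    (∀ T' : ℝ, 0 < T' →
      1 < ε * ∫ s in (0 : ℝ)..T', (∫ x, |w T' x|) / (∫ x, |w s x|) → T ≤ T') := by
  have hfc : Continuous f := hf_smooth.continuous
  obtain ⟨M, hM⟩ := hfc.exists_forall_abs_le_of_tendsto_cocompact hf_decay
  have habs : ∀ s : ℝ, 0 ≤ s → ∫ x, |w s x| = ∫ x, w s x := fun s hs =>
    integral_congr_ae (.of_forall fun x => abs_of_nonneg (hw_nonneg s hs x))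
  have main : ∀ t ∈ Set.Ioo (0 : ℝ) T,
      ε * ∫ s in (0 : ℝ)..t, (∫ x, |w t x|) / (∫ x, |w s x|) ≤ 1 := by
    intro t ht
    obtain ⟨g, hg, hwg⟩ := hw_unif t ht.1.le
    have hPt : 0 < ∫ x, w t x := by
      rw [← habs t ht.1.le]
      exact hw_pos t ht.1.le
    have hbound : ∀ δ > 0, ∫ s in (0 : ℝ)..t, (∫ x, w (t - s) x)⁻¹ ≤
        (saturate δ ε * ∫ x, w t x)⁻¹ := fun δ hδ =>
      integral_inv_integral_le_of_saturate (v := fun s x => -u s x) hfc (fun x => (hf_pos x).le)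
        hM hε hδ ht (fun x => by rw [hu0, neg_neg])
        (fun s hs x => neg_nonneg.2 (hu_nonpos s hs x)) (fun s hs => (hu_reg s hs).neg)
        (fun s hs x => (hu_eq s hs x).neg.congr_deriv (by
          have h1 : deriv (fun y => -u s y) = fun y => -deriv (u s) y := by
            ext y
            exact deriv.fun_neg
          rw [h1, deriv.fun_neg]
          ring))
        hw_eq (fun s hs => hw_reg s hs.le) (fun s hs => hw_nonneg s hs.le)
        (fun s hs => (hw_int s hs.le).1) (fun s hs => (hw_int s hs.le).2)
        (fun s hs => (habs s hs.le).subst (hw_pos s hs.le)) hg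
        (fun s hs x => (hwg s hs x).1) (fun s hs x => (hwg s hs x).2)
    have hcongr : ∫ s in (0 : ℝ)..t, (∫ x, |w t x|) / (∫ x, |w s x|) =
        (∫ x, w t x) * ∫ s in (0 : ℝ)..t, (∫ x, w (t - s) x)⁻¹ := by
      rw [intervalIntegral.integral_comp_sub_left (fun s => (∫ x, w s x)⁻¹), sub_self, sub_zero,
        ← intervalIntegral.integral_const_mul]
      refine intervalIntegral.integral_congr fun s hs => ?_
      rw [Set.uIcc_of_le ht.1.le] at hs
      simp only [habs t ht.1.le, habs s hs.1, div_eq_mul_inv]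
    refine le_of_forall_pos_le_add fun η hη => ?_
    have hδ : 0 < η / ε := by positivity
    calc ε * ∫ s in (0 : ℝ)..t, (∫ x, |w t x|) / (∫ x, |w s x|)
        ≤ ε * ((∫ x, w t x) * (saturate (η / ε) ε * ∫ x, w t x)⁻¹) := by
          rw [hcongr]
          have := hbound _ hδ
          gcongr
      _ = 1 + η := by
          unfold saturate
          field_simp
  refine ⟨main, fun T' hT' h => ?_⟩
  by_contra! hlt
  exact absurd (main T' ⟨hT', hlt⟩) (not_le.2 h)
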